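/- (Theorem on M_α, first weight condition) Let 0≤α<mn and q = n/(mn−α). Let u_1,…,u_m and v be weights on ℝ^n, write u⃗^{mq} = (u_1^{mq},…,u_m^{mq}) and ν = ∏_{i=1}^m u_i^q. Suppose u⃗^{mq} ∈ A_{(1,…,1)} and ν v^q ∈ A_∞. Then there exists a constant C such that for all f_1,…,f_m, ‖M_α(f⃗)/v‖_{L^{q,∞}(ν v^q)} ≤ C ∏_{i=1}^m ‖f_i‖_{L^1(u_i)}. -/

import Mathlib

open MeasureTheory ENNReal Set

noncomputable section

/-- Euclidean space `ℝ^n`. -/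
abbrev ESp (n : ℕ) := EuclideanSpace ℝ (Fin n)

/-- An axis-parallel cube with positive finite side length. -/
def IsCube {n : ℕ} (Q : Set (ESp n)) : Prop :=
  ∃ (c : Fin n → ℝ) (h : ℝ), 0 < h ∧ Q = {x : ESp n | ∀ i, c i ≤ x i ∧ x i ≤ c i + h}

/-- The measure `w(E) = ∫_E w` associated to a weight `w`. -/
def wMeas {n : ℕ} (w : ESp n → ℝ) (E : Set (ESp n)) : ℝ≥0∞ :=
  ∫⁻ x in E, ENNReal.ofReal (w x)

/-- A weight: a nonnegative locally integrable function, positive (and finite) a.e. -/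
def IsWeight {n : ℕ} (w : ESp n → ℝ) : Prop :=
  Measurable w ∧ (∀ x, 0 ≤ w x) ∧ (∀ᵐ x ∂(volume : Measure (ESp n)), 0 < w x) ∧
    ∀ Q : Set (ESp n), IsCube Q → wMeas w Q < ⊤

/-- `C` is an admissible `A₁` constant for `w`. -/
def A1Const {n : ℕ} (w : ESp n → ℝ) (C : ℝ≥0∞) : Prop :=
  ∀ Q : Set (ESp n), IsCube Q →
    (volume Q)⁻¹ * wMeas w Q ≤ C * essInf (fun x => ENNReal.ofReal (w x)) (volume.restrict Q)

/-- The Muckenhoupt class `A₁`. -/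
def IsA1 {n : ℕ} (w : ESp n → ℝ) : Prop := ∃ C : ℝ≥0∞, C < ⊤ ∧ A1Const w C

/-- The Muckenhoupt class `A_p`, `1 < p < ∞`. -/
def IsAp {n : ℕ} (w : ESp n → ℝ) (p : ℝ) : Prop :=
  ∃ C : ℝ≥0∞, C < ⊤ ∧ ∀ Q : Set (ESp n), IsCube Q →
    ((volume Q)⁻¹ * wMeas w Q) *
      ((volume Q)⁻¹ * ∫⁻ x in Q, ENNReal.ofReal (w x) ^ (1 - p / (p - 1))) ^ (p - 1) ≤ C

/-- The class `A_∞ = ⋃_{p ≥ 1} A_p`. -/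
def IsAinfty {n : ℕ} (w : ESp n → ℝ) : Prop :=
  IsA1 w ∨ ∃ p : ℝ, 1 < p ∧ IsAp w p

/-- The Hardy–Littlewood maximal function (over cubes). -/
def maxFn {n : ℕ} (f : ESp n → ℝ) (x : ESp n) : ℝ≥0∞ :=
  ⨆ (Q : Set (ESp n)) (_ : IsCube Q) (_ : x ∈ Q),
    (volume Q)⁻¹ * ∫⁻ y in Q, ENNReal.ofReal |f y|

/-- The Fujii–Wilson `A_∞` constant. -/
def FW {n : ℕ} (w : ESp n → ℝ) : ℝ≥0∞ :=
  ⨆ (Q : Set (ESp n)) (_ : IsCube Q),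
    (wMeas w Q)⁻¹ * ∫⁻ x in Q, maxFn (Q.indicator w) x

/-- The weighted weak `L^{q,∞}(w)` quasinorm of `g`. -/
def wnorm {n : ℕ} (g : ESp n → ℝ≥0∞) (q : ℝ) (w : ESp n → ℝ) : ℝ≥0∞ :=
  ⨆ (t : ℝ) (_ : 0 < t), ENNReal.ofReal t * (wMeas w {x | ENNReal.ofReal t < g x}) ^ (1 / q)

/-- The weighted `L¹(w)` norm. -/
def L1norm {n : ℕ} (f : ESp n → ℝ) (w : ESp n → ℝ) : ℝ≥0∞ :=
  ∫⁻ x, ENNReal.ofReal (|f x| * w x)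

/-- The fractional maximal operator `M_α`. -/
def fracM {n : ℕ} (α : ℝ) (f : ESp n → ℝ) (x : ESp n) : ℝ≥0∞ :=
  ⨆ (Q : Set (ESp n)) (_ : IsCube Q) (_ : x ∈ Q),
    ((volume Q) ^ (1 - α / (n : ℝ)))⁻¹ * ∫⁻ y in Q, ENNReal.ofReal |f y|

/-- The fractional integral (Riesz potential) `I_α`. -/
def fracI {n : ℕ} (α : ℝ) (f : ESp n → ℝ) (x : ESp n) : ℝ :=
  ∫ y, f y / dist x y ^ ((n : ℝ) - α)

/-- The multi(sub)linear maximal function `𝓜`. -/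
def multiM {n m : ℕ} (f : Fin m → ESp n → ℝ) (x : ESp n) : ℝ≥0∞ :=
  ⨆ (Q : Set (ESp n)) (_ : IsCube Q) (_ : x ∈ Q),
    ∏ i, (volume Q)⁻¹ * ∫⁻ y in Q, ENNReal.ofReal |f i y|

/-- The multi(sub)linear fractional maximal operator `𝓜_α`. -/
def multiMα {n m : ℕ} (α : ℝ) (f : Fin m → ESp n → ℝ) (x : ESp n) : ℝ≥0∞ :=
  ⨆ (Q : Set (ESp n)) (_ : IsCube Q) (_ : x ∈ Q),
    ∏ i, ((volume Q) ^ (1 - α / ((m : ℝ) * (n : ℝ))))⁻¹ * ∫⁻ y in Q, ENNReal.ofReal |f i y|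

/-- The multilinear fractional integral `𝓘_α`. -/
def multiIα {n m : ℕ} (α : ℝ) (f : Fin m → ESp n → ℝ) (x : ESp n) : ℝ :=
  ∫ y : Fin m → ESp n, (∏ i, f i (y i)) / (∑ i, dist x (y i)) ^ ((m : ℝ) * (n : ℝ) - α)

/-- The multilinear class `A_{(1,…,1)}`. -/
def A11 {n m : ℕ} (w : Fin m → ESp n → ℝ) : Prop :=
  ∃ C : ℝ≥0∞, C < ⊤ ∧ ∀ Q : Set (ESp n), IsCube Q →
    ((volume Q)⁻¹ * ∫⁻ x in Q, ENNReal.ofReal (∏ i, w i x ^ ((m : ℝ)⁻¹))) ^ (m : ℝ) *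
      ∏ i, (essInf (fun x => ENNReal.ofReal (w i x)) (volume.restrict Q))⁻¹ ≤ C


section

/-! ### Dyadic cubes -/

/-- index of the dyadic cube of generation `k` (side `2^{-k}`) containing `x`. -/
def idx {n : ℕ} (k : ℤ) (x : ESp n) : Fin n → ℤ := fun i => ⌊(2:ℝ) ^ k * x i⌋

/-- dyadic cube -/
def dq {n : ℕ} (k : ℤ) (z : Fin n → ℤ) : Set (ESp n) := {x | idx k x = z}

/-- tripled dyadic cube -/
def tq {n : ℕ} (k : ℤ) (z : Fin n → ℤ) : Set (ESp n) := {x | ∀ i, |idx k x i - z i| ≤ 1}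

/-- volume of a dyadic cube -/
def dvol (n : ℕ) (k : ℤ) : ℝ≥0∞ := ENNReal.ofReal ((2:ℝ) ^ (-k)) ^ n

lemma floor_coarse (j : ℕ) (k : ℤ) (t : ℝ) :
    ⌊(2:ℝ) ^ (k - j) * t⌋ = ⌊(2:ℝ) ^ k * t⌋ / (2 ^ j : ℕ) := by
  rw [← Int.floor_div_natCast]
  congr 1
  rw [zpow_sub₀ (by norm_num)]
  push_cast
  rw [zpow_natCast]
  ring

lemma idx_coarse {n : ℕ} (j : ℕ) (k : ℤ) (x : ESp n) (i : Fin n) :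
    idx (k - j) x i = idx k x i / (2 ^ j : ℕ) := floor_coarse j k (x i)

lemma idx_mono {n : ℕ} {k l : ℤ} (h : l ≤ k) {x y : ESp n} (hxy : idx k x = idx k y) :
    idx l x = idx l y := by
  obtain ⟨j, hj⟩ := Int.le.dest h
  have : l = k - j := by omega
  subst this
  ext i
  rw [idx_coarse, idx_coarse, hxy]

lemma idx_near {n : ℕ} {k l : ℤ} (h : l ≤ k) {x y : ESp n} (i : Fin n)
    (hxy : |idx k x i - idx k y i| ≤ 1) :
    |idx l x i - idx l y i| ≤ 1 := by
  obtain ⟨j, hj⟩ := Int.le.dest h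
  have : l = k - j := by omega
  subst this
  rw [idx_coarse, idx_coarse]
  generalize idx k x i = a at *
  generalize idx k y i = b at *
  have hN : (1:ℤ) ≤ ((2 ^ j : ℕ) : ℤ) := by exact_mod_cast Nat.one_le_two_pow
  generalize ((2 ^ j : ℕ) : ℤ) = N at *
  rw [abs_le] at *
  have h1 : a / N ≤ (b + 1 * N) / N := Int.ediv_le_ediv (by omega) (by omega)
  have h2 : b / N ≤ (a + 1 * N) / N := Int.ediv_le_ediv (by omega) (by omega)
  rw [Int.add_mul_ediv_right _ _ (by omega)] at h1 h2
  omega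

lemma mem_dq {n : ℕ} (k : ℤ) (x : ESp n) : x ∈ dq k (idx k x) := rfl

lemma dq_sub_tq {n : ℕ} (k : ℤ) (z : Fin n → ℤ) : dq k z ⊆ tq k z := by
  intro x hx i
  have : idx k x = z := hx
  simp [this]

lemma dq_sub_dq {n : ℕ} {k l : ℤ} (h : l ≤ k) (x : ESp n) : dq k (idx k x) ⊆ dq l (idx l x) :=
  fun _ hy => idx_mono h hy

lemma measurable_idx {n : ℕ} (k : ℤ) : Measurable (idx (n := n) k) := by
  unfold idx
  apply measurable_pi_lambda
  intro i
  exact Int.measurable_floor.comp (by fun_prop)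

lemma meas_dq {n : ℕ} (k : ℤ) (z : Fin n → ℤ) : MeasurableSet (dq k z) :=
  measurable_idx k (measurableSet_singleton z)

lemma meas_tq {n : ℕ} (k : ℤ) (z : Fin n → ℤ) : MeasurableSet (tq k z) :=
  measurable_idx k (MeasurableSet.of_discrete (s := {w : Fin n → ℤ | ∀ i, |w i - z i| ≤ 1}))

/-- closed cube -/
def cq {n : ℕ} (c : Fin n → ℝ) (h : ℝ) : Set (ESp n) := {x : ESp n | ∀ i, c i ≤ x i ∧ x i ≤ c i + h}

lemma cq_eq {n : ℕ} (c : Fin n → ℝ) (h : ℝ) :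
    cq c h = (MeasurableEquiv.toLp 2 (Fin n → ℝ)).symm ⁻¹' (Icc c (fun i => c i + h)) := by
  ext x
  simp [cq, Pi.le_def, forall_and]

lemma vol_cq {n : ℕ} (c : Fin n → ℝ) (h : ℝ) :
    volume (cq c h) = ENNReal.ofReal h ^ n := by
  rw [cq_eq, (EuclideanSpace.volume_preserving_symm_measurableEquiv_toLp (Fin n)).measure_preimage
    measurableSet_Icc.nullMeasurableSet, Real.volume_Icc_pi]
  simp

lemma meas_cq {n : ℕ} (c : Fin n → ℝ) (h : ℝ) : MeasurableSet (cq c h) := by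
  rw [cq_eq]
  exact (MeasurableEquiv.measurable _) measurableSet_Icc

lemma IsCube.meas {n : ℕ} {Q : Set (ESp n)} (h : IsCube Q) : MeasurableSet Q := by
  obtain ⟨c, h, hh, rfl⟩ := h
  exact meas_cq c h

lemma dq_eq {n : ℕ} (k : ℤ) (z : Fin n → ℤ) :
    dq k z = (MeasurableEquiv.toLp 2 (Fin n → ℝ)).symm ⁻¹'
      (univ.pi fun i => Ico ((2:ℝ) ^ (-k) * z i) ((2:ℝ) ^ (-k) * z i + (2:ℝ) ^ (-k))) := by
  ext x
  have h2 : (0:ℝ) < 2 ^ k := by positivity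
  simp only [dq, idx, mem_ofPred_eq, funext_iff, mem_preimage, mem_pi, mem_univ, true_implies,
    Int.floor_eq_iff, mem_Ico]
  refine forall_congr' fun i => ?_
  have e : (MeasurableEquiv.toLp 2 (Fin n → ℝ)).symm x i = x i := rfl
  rw [e, zpow_neg]
  constructor
  · rintro ⟨h1, h3⟩
    constructor
    · rw [inv_mul_le_iff₀ h2]; exact h1
    · have : x i < (2 ^ k)⁻¹ * (z i + 1) := by rw [lt_inv_mul_iff₀ h2]; exact h3
      linarith
  · rintro ⟨h1, h3⟩
    constructor
    · rw [inv_mul_le_iff₀ h2] at h1; exact h1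
    · have : x i < (2 ^ k)⁻¹ * (z i + 1) := by linarith
      rw [lt_inv_mul_iff₀ h2] at this; exact this

lemma vol_dq {n : ℕ} (k : ℤ) (z : Fin n → ℤ) : volume (dq k z) = dvol n k := by
  rw [dq_eq, (EuclideanSpace.volume_preserving_symm_measurableEquiv_toLp (Fin n)).measure_preimage
    (MeasurableSet.univ_pi fun _ => measurableSet_Ico).nullMeasurableSet, Real.volume_pi_Ico]
  simp [dvol]

/-- closure of dyadic cube -/
def dcl {n : ℕ} (k : ℤ) (z : Fin n → ℤ) : Set (ESp n) :=
  cq (fun i => (2:ℝ) ^ (-k) * z i) ((2:ℝ) ^ (-k))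

/-- closure of tripled dyadic cube -/
def tcl {n : ℕ} (k : ℤ) (z : Fin n → ℤ) : Set (ESp n) :=
  cq (fun i => (2:ℝ) ^ (-k) * (z i - 1)) (3 * (2:ℝ) ^ (-k))

lemma dcl_cube {n : ℕ} (k : ℤ) (z : Fin n → ℤ) : IsCube (dcl k z) :=
  ⟨_, _, by positivity, rfl⟩

lemma tcl_cube {n : ℕ} (k : ℤ) (z : Fin n → ℤ) : IsCube (tcl k z) :=
  ⟨_, _, by positivity, rfl⟩

lemma vol_dcl {n : ℕ} (k : ℤ) (z : Fin n → ℤ) : volume (dcl k z) = dvol n k := vol_cq _ _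

lemma vol_tcl {n : ℕ} (k : ℤ) (z : Fin n → ℤ) : volume (tcl k z) = 3 ^ n * dvol n k := by
  rw [tcl, vol_cq, dvol, ← mul_pow, ENNReal.ofReal_mul (by norm_num)]
  norm_num

lemma dq_sub_dcl {n : ℕ} (k : ℤ) (z : Fin n → ℤ) : dq k z ⊆ dcl k z := by
  rw [dq_eq]
  intro x hx i
  have := hx i (mem_univ i)
  exact ⟨this.1, this.2.le⟩

lemma tq_sub_tcl {n : ℕ} (k : ℤ) (z : Fin n → ℤ) : tq k z ⊆ tcl k z := by
  intro x hx i
  have h1 := hx i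
  have h2 : x ∈ dq k (idx k x) := rfl
  have h3 := dq_sub_dcl _ _ h2 i
  rw [abs_le] at h1
  have h4 : (z i : ℝ) - 1 ≤ idx k x i := by exact_mod_cast (by omega : z i - 1 ≤ idx k x i)
  have h5 : (idx k x i : ℝ) ≤ z i + 1 := by exact_mod_cast (by omega : idx k x i ≤ z i + 1)
  have h6 : (0:ℝ) < 2 ^ (-k) := by positivity
  constructor
  · nlinarith [h3.1]
  · nlinarith [h3.2]

lemma dvol_ne_zero (n : ℕ) (k : ℤ) : dvol n k ≠ 0 := by
  unfold dvol
  have h6 : (0:ℝ) < 2 ^ (-k) := by positivity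
  exact pow_ne_zero _ (by simpa using h6)

lemma dvol_ne_top (n : ℕ) (k : ℤ) : dvol n k ≠ ⊤ := by
  unfold dvol
  exact ENNReal.pow_ne_top ENNReal.ofReal_ne_top

lemma dvol_parent (n : ℕ) (k : ℤ) : dvol n (k - 1) = 2 ^ n * dvol n k := by
  unfold dvol
  rw [← mul_pow]
  congr 1
  rw [show -(k-1) = 1 + -k by ring, zpow_add₀ (by norm_num), ENNReal.ofReal_mul (by norm_num)]
  norm_num

/-- any cube `Q` containing `x` lies in a comparable tripled dyadic cube centered at `x`. -/
lemma cube_in_tq {n : ℕ} {Q : Set (ESp n)} (hQ : IsCube Q) {x : ESp n} (hx : x ∈ Q) :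
    ∃ k : ℤ, Q ⊆ tq k (idx k x) ∧ volume (tcl (n := n) k (idx k x)) ≤ 6 ^ n * volume Q := by
  obtain ⟨c, h, hh, rfl⟩ := hQ
  obtain ⟨j, hj1, hj2⟩ := exists_mem_Ioc_zpow hh (one_lt_two)
  refine ⟨-(j+1), ?_, ?_⟩
  · intro y hy i
    have h2 : (0:ℝ) < 2 ^ (-(j+1)) := by positivity
    have h3 : (2:ℝ) ^ (-(j+1)) * h ≤ 1 := by
      rw [zpow_neg, inv_mul_le_iff₀ (by positivity)]; linarith
    have hy := hy i
    have hx := hx i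
    have a1 : (2:ℝ) ^ (-(j+1)) * x i ≤ 2 ^ (-(j+1)) * y i + 1 := by nlinarith
    have a2 : (2:ℝ) ^ (-(j+1)) * y i ≤ 2 ^ (-(j+1)) * x i + 1 := by nlinarith
    have b1 := Int.floor_mono a1
    have b2 := Int.floor_mono a2
    rw [Int.floor_add_one] at b1 b2
    simp only [idx]
    rw [abs_le]
    omega
  · have := vol_cq c h
    rw [cq] at this
    rw [this, vol_tcl, dvol, ← mul_pow, ← mul_pow]
    refine pow_le_pow_left₀ zero_le ?_ n
    rw [neg_neg, zpow_add₀ (by norm_num), zpow_one,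
      show (3:ℝ≥0∞) = ENNReal.ofReal 3 by norm_num, show (6:ℝ≥0∞) = ENNReal.ofReal 6 by norm_num,
      ← ENNReal.ofReal_mul (by norm_num), ← ENNReal.ofReal_mul (by norm_num)]
    apply ENNReal.ofReal_le_ofReal
    nlinarith

/-- small dyadic cubes inside open sets -/
lemma open_dyadic {n : ℕ} {G : Set (ESp n)} (hG : IsOpen G) {x : ESp n} (hx : x ∈ G) (k0 : ℤ) :
    ∃ k, k0 ≤ k ∧ dq k (idx k x) ⊆ G := by
  have hG' : IsOpen ((MeasurableEquiv.toLp 2 (Fin n → ℝ)) ⁻¹' G) :=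
    hG.preimage (PiLp.continuous_toLp 2 _)
  obtain ⟨ε, hε, hb⟩ := Metric.isOpen_iff.1 hG' ((MeasurableEquiv.toLp 2 (Fin n → ℝ)).symm x)
    (by simpa using hx)
  obtain ⟨N, hN⟩ := exists_pow_lt_of_lt_one hε (by norm_num : (1/2:ℝ) < 1)
  refine ⟨max k0 N, le_max_left _ _, ?_⟩
  intro y hy
  have hy1 := dq_sub_dcl _ _ hy
  have hx1 := dq_sub_dcl _ _ (mem_dq (max k0 N) x)
  have hs : (2:ℝ) ^ (-(max k0 (N:ℤ))) < ε := by
    refine lt_of_le_of_lt ?_ hN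
    calc (2:ℝ) ^ (-(max k0 (N:ℤ))) ≤ 2 ^ (-(N:ℤ)) :=
          zpow_le_zpow_right₀ (by norm_num) (by simp)
      _ = (1/2:ℝ)^N := by rw [zpow_neg, zpow_natCast]; simp
  have : (MeasurableEquiv.toLp 2 (Fin n → ℝ)).symm y ∈
      (MeasurableEquiv.toLp 2 (Fin n → ℝ)) ⁻¹' G := by
    apply hb
    rw [Metric.mem_ball, dist_pi_lt_iff hε]
    intro i
    have e1 : (MeasurableEquiv.toLp 2 (Fin n → ℝ)).symm x i = x i := rfl
    have e2 : (MeasurableEquiv.toLp 2 (Fin n → ℝ)).symm y i = y i := rfl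
    rw [e1, e2, Real.dist_eq, abs_lt]
    have := hy1 i
    have := hx1 i
    constructor <;> linarith
  simpa using this


end

section

/-! ### Maximal dyadic cubes -/

/-- maximal dyadic cubes satisfying `P` -/
def Mx {n : ℕ} (P : ℤ → (Fin n → ℤ) → Prop) : Set (ℤ × (Fin n → ℤ)) :=
  {I | P I.1 I.2 ∧ ∀ l < I.1, ∀ x ∈ dq I.1 I.2, ¬ P l (idx l x)}

/-- `P` has no arbitrarily large cubes over any point -/
def BddB {n : ℕ} (P : ℤ → (Fin n → ℤ) → Prop) : Prop :=
  ∀ x : ESp n, ∃ b : ℤ, ∀ k, P k (idx k x) → b ≤ k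

lemma Mx_exists {n : ℕ} {P : ℤ → (Fin n → ℤ) → Prop} (hP : BddB P) {k : ℤ} {x : ESp n}
    (h : P k (idx k x)) : ∃ l ≤ k, (l, idx l x) ∈ Mx P := by
  obtain ⟨l, hl, hl'⟩ := Int.exists_least_of_bdd (P := fun k => P k (idx k x)) (hP x) ⟨k, h⟩
  refine ⟨l, hl' _ h, hl, ?_⟩
  intro j hj y hy hPj
  have : idx j y = idx j x := idx_mono hj.le hy
  rw [this] at hPj
  exact absurd (hl' _ hPj) (by simpa using hj)

lemma Mx_eq {n : ℕ} {P : ℤ → (Fin n → ℤ) → Prop} {I J : ℤ × (Fin n → ℤ)}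
    (hI : I ∈ Mx P) (hJ : J ∈ Mx P) {x : ESp n} (hxI : x ∈ dq I.1 I.2) (hxJ : x ∈ dq J.1 J.2) :
    I = J := by
  have hI2 : idx I.1 x = I.2 := hxI
  have hJ2 : idx J.1 x = J.2 := hxJ
  rcases lt_trichotomy I.1 J.1 with h | h | h
  · exact absurd (by rw [hI2]; exact hI.1) (hJ.2 _ h x hxJ)
  · ext1
    · exact h
    · rw [← hI2, ← hJ2, h]
  · exact absurd (by rw [hJ2]; exact hJ.1) (hI.2 _ h x hxI)

lemma Mx_disj {n : ℕ} (P : ℤ → (Fin n → ℤ) → Prop) :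
    (Mx P).PairwiseDisjoint (fun I => dq (n := n) I.1 I.2) := by
  intro I hI J hJ hne
  rw [Function.onFun, Set.disjoint_left]
  intro x hx hx'
  exact hne (Mx_eq hI hJ hx hx')

lemma Mx_sum {n : ℕ} (P : ℤ → (Fin n → ℤ) → Prop) (μ : Measure (ESp n)) :
    μ (⋃ I ∈ Mx P, dq I.1 I.2) = ∑' I : Mx P, μ (dq I.1.1 I.1.2) :=
  measure_biUnion (Set.to_countable _) (Mx_disj P) (fun _ _ => meas_dq _ _)

lemma Mx_sum_le {n : ℕ} (P : ℤ → (Fin n → ℤ) → Prop) (μ : Measure (ESp n)) :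
    ∑' I : Mx P, μ (dq I.1.1 I.1.2) ≤ μ univ := by
  rw [← Mx_sum]
  exact measure_mono (subset_univ _)

lemma nonempty_dq {n : ℕ} (k : ℤ) (z : Fin n → ℤ) : (dq k z).Nonempty := by
  by_contra h
  rw [not_nonempty_iff_eq_empty] at h
  have := vol_dq k z
  rw [h, measure_empty] at this
  exact dvol_ne_zero _ _ this.symm

/-- weak type bound for the dyadic maximal operator -/
lemma Mx_weak {n : ℕ} (P : ℤ → (Fin n → ℤ) → Prop) (hb : BddB P) (μ W : Measure (ESp n))
    (s : ℝ≥0∞) (hP : ∀ k z, P k z → W (dq k z) ≤ s * μ (dq k z)) :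
    W (⋃ (k : ℤ) (z : Fin n → ℤ) (_ : P k z), dq k z) ≤ s * μ univ := by
  have : (⋃ (k : ℤ) (z : Fin n → ℤ) (_ : P k z), dq k z) ⊆ ⋃ I ∈ Mx P, dq I.1 I.2 := by
    intro x hx
    simp only [mem_iUnion] at hx ⊢
    obtain ⟨k, z, hz, hx⟩ := hx
    have hx : idx k x = z := hx
    rw [← hx] at hz
    obtain ⟨l, _, hl⟩ := Mx_exists hb hz
    exact ⟨_, hl, mem_dq l x⟩
  refine (measure_mono this).trans ?_
  rw [Mx_sum]
  calc ∑' I : Mx P, W (dq I.1.1 I.1.2) ≤ ∑' I : Mx P, s * μ (dq I.1.1 I.1.2) :=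
        ENNReal.tsum_le_tsum fun I => hP _ _ I.2.1
    _ = s * ∑' I : Mx P, μ (dq I.1.1 I.1.2) := ENNReal.tsum_mul_left
    _ ≤ s * μ univ := by gcongr; exact Mx_sum_le P μ

/-! ### Restricted `A_p` property -/

/-- The restricted `A_p` property of a measure, together with local finiteness and positivity. -/
structure RA {n : ℕ} (μ : Measure (ESp n)) (p : ℕ) (C : ℝ≥0∞) : Prop where
  le : ∀ Q : Set (ESp n), IsCube Q → ∀ F ⊆ Q, MeasurableSet F →
    volume F ^ p * μ Q ≤ C * volume Q ^ p * μ F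
  fin : ∀ Q : Set (ESp n), IsCube Q → μ Q ≠ ⊤
  pos : ∀ F : Set (ESp n), MeasurableSet F → volume F ≠ 0 → μ F ≠ 0
  C0 : C ≠ 0
  Ct : C ≠ ⊤

section
variable {n : ℕ} {μ : Measure (ESp n)} {p : ℕ} {C : ℝ≥0∞}

lemma RA.dfin (h : RA μ p C) (k : ℤ) (z : Fin n → ℤ) : μ (dq k z) ≠ ⊤ :=
  ne_top_of_le_ne_top (h.fin _ (dcl_cube k z)) (measure_mono (dq_sub_dcl k z))

lemma RA.tfin (h : RA μ p C) (k : ℤ) (z : Fin n → ℤ) : μ (tq k z) ≠ ⊤ :=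
  ne_top_of_le_ne_top (h.fin _ (tcl_cube k z)) (measure_mono (tq_sub_tcl k z))

lemma RA.dpos (h : RA μ p C) (k : ℤ) (z : Fin n → ℤ) : μ (dq k z) ≠ 0 :=
  h.pos _ (meas_dq k z) (by rw [vol_dq]; exact dvol_ne_zero _ _)

lemma RA.dle (h : RA μ p C) (k : ℤ) (z : Fin n → ℤ) {F : Set (ESp n)} (hF : F ⊆ dq k z)
    (hm : MeasurableSet F) : volume F ^ p * μ (dq k z) ≤ C * dvol n k ^ p * μ F := by
  have := h.le _ (dcl_cube k z) F (hF.trans (dq_sub_dcl k z)) hm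
  rw [vol_dcl] at this
  refine le_trans ?_ this
  gcongr
  exact dq_sub_dcl k z

lemma RA.tle (h : RA μ p C) (k : ℤ) (z : Fin n → ℤ) {F : Set (ESp n)} (hF : F ⊆ tq k z)
    (hm : MeasurableSet F) :
    volume F ^ p * μ (tq k z) ≤ C * (3 ^ n * dvol n k) ^ p * μ F := by
  have := h.le _ (tcl_cube k z) F (hF.trans (tq_sub_tcl k z)) hm
  rw [vol_tcl] at this
  refine le_trans ?_ this
  gcongr
  exact tq_sub_tcl k z

/-- cancelling a positive finite factor -/
lemma cancel_left {a b c : ℝ≥0∞} (h0 : a ≠ 0) (ht : a ≠ ⊤) (h : a * b ≤ a * c) : b ≤ c :=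
  (ENNReal.mul_le_mul_iff_right h0 ht).1 h

lemma RA.tdoub (h : RA μ p C) (k : ℤ) (z : Fin n → ℤ) :
    μ (tq k z) ≤ C * (3 ^ n) ^ p * μ (dq k z) := by
  have := h.tle k z (dq_sub_tq k z) (meas_dq k z)
  rw [vol_dq, mul_pow] at this
  apply cancel_left (pow_ne_zero p (dvol_ne_zero n k)) (ENNReal.pow_ne_top (dvol_ne_top n k))
  refine this.trans (le_of_eq ?_)
  ring

/-- large subsets of dyadic cubes -/
lemma RA.half (h : RA μ p C) (k : ℤ) (z : Fin n → ℤ) {F : Set (ESp n)} (hF : F ⊆ dq k z)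
    (hm : MeasurableSet F) (hv : dvol n k ≤ 2 * volume F) :
    μ (dq k z) ≤ C * 2 ^ p * μ F := by
  have := h.dle k z hF hm
  apply cancel_left (pow_ne_zero p (dvol_ne_zero n k)) (ENNReal.pow_ne_top (dvol_ne_top n k))
  calc dvol n k ^ p * μ (dq k z) ≤ (2 * volume F) ^ p * μ (dq k z) := by gcongr
    _ = 2 ^ p * (volume F ^ p * μ (dq k z)) := by ring
    _ ≤ 2 ^ p * (C * dvol n k ^ p * μ F) := by gcongr
    _ = _ := by ring

lemma split_meas {μ : Measure (ESp n)} {F D : Set (ESp n)} (hF : F ⊆ D) (hm : MeasurableSet F) :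
    μ F + μ (D \ F) = μ D := by
  rw [← measure_inter_add_sdiff D hm, inter_eq_self_of_subset_right hF]

lemma half_compl (k : ℤ) (z : Fin n → ℤ) {F : Set (ESp n)} (hF : F ⊆ dq k z)
    (hm : MeasurableSet F) (hv : 2 * volume F ≤ dvol n k) :
    dvol n k ≤ 2 * volume (dq k z \ F) := by
  have e : volume F + volume (dq k z \ F) = dvol n k := by
    rw [split_meas hF hm, vol_dq]
  have hfin : volume F ≠ ⊤ := by
    refine ne_top_of_le_ne_top (dvol_ne_top n k) ?_
    rw [← vol_dq k z]
    exact measure_mono hF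
  have h2 : volume F ≤ volume (dq k z \ F) := by
    rw [← e, two_mul] at hv
    exact (ENNReal.add_le_add_iff_left hfin).1 hv
  rw [← e, two_mul]
  gcongr

/-- small subsets of dyadic cubes -/
lemma RA.small (h : RA μ p C) (k : ℤ) (z : Fin n → ℤ) {F : Set (ESp n)} (hF : F ⊆ dq k z)
    (hm : MeasurableSet F) (hv : 2 * volume F ≤ dvol n k) :
    (1 + (C * 2 ^ p)⁻¹) * μ F ≤ μ (dq k z) := by
  have hc := half_compl k z hF hm hv
  have h1 := h.half k z (F := dq k z \ F) sdiff_subset ((meas_dq k z).diff hm) hc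
  have hK0 : C * 2 ^ p ≠ 0 := mul_ne_zero h.C0 (by simp)
  have hKt : C * 2 ^ p ≠ ⊤ := ENNReal.mul_ne_top h.Ct (by simp)
  have e : μ (dq k z) = μ F + μ (dq k z \ F) := (split_meas hF hm).symm
  have h2 : (C * 2 ^ p)⁻¹ * μ F ≤ μ (dq k z \ F) := by
    rw [ENNReal.inv_mul_le_iff hK0 hKt]
    exact (measure_mono hF).trans h1
  rw [e, add_mul, one_mul]
  gcongr

lemma RA.parent (h : RA μ p C) (k : ℤ) (x : ESp n) :
    μ (dq (k-1) (idx (k-1) x)) ≤ C * (2 ^ n) ^ p * μ (dq k (idx k x)) := by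
  have := h.dle (k-1) _ (dq_sub_dq (by omega : k - 1 ≤ k) x) (meas_dq k _)
  rw [vol_dq, dvol_parent, mul_pow] at this
  apply cancel_left (pow_ne_zero p (dvol_ne_zero n k)) (ENNReal.pow_ne_top (dvol_ne_top n k))
  refine this.trans (le_of_eq ?_)
  ring

lemma RA.grow (hn : 0 < n) (h : RA μ p C) (x : ESp n) (k : ℤ) (j : ℕ) :
    (1 + (C * 2 ^ p)⁻¹) ^ j * μ (dq k (idx k x)) ≤ μ (dq (k - j) (idx (k - j) x)) := by
  induction j with
  | zero => simp
  | succ j ih =>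
    have h1 := h.small (k - j - 1) _ (dq_sub_dq (by omega : k - j - 1 ≤ k - j) x) (meas_dq _ _)
      (by
        rw [vol_dq, dvol_parent]
        gcongr
        calc (2:ℝ≥0∞) = 2 ^ 1 := by simp
          _ ≤ 2 ^ n := pow_le_pow_right₀ (by norm_num) hn)
    have e : k - (j+1 : ℕ) = k - j - 1 := by push_cast; ring
    rw [e]
    refine le_trans ?_ h1
    rw [pow_succ', mul_assoc]
    gcongr

lemma RA.unbdd (hn : 0 < n) (h : RA μ p C) (x : ESp n) {B : ℝ≥0∞} (hB : B ≠ ⊤) :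
    ∃ b : ℤ, ∀ k, μ (dq k (idx k x)) ≤ B → b ≤ k := by
  have hK0 : (C * 2 ^ p)⁻¹ ≠ 0 := ENNReal.inv_ne_zero.2 (ENNReal.mul_ne_top h.Ct (by simp))
  have h1 : (1:ℝ≥0∞) < 1 + (C * 2 ^ p)⁻¹ := ENNReal.lt_add_right (by simp) hK0
  have hlim : ∃ j : ℕ, B < (1 + (C * 2 ^ p)⁻¹) ^ j * μ (dq 0 (idx 0 x)) := by
    have := ENNReal.tendsto_pow_atTop_nhds_top_iff.2 h1
    have h2 := ENNReal.Tendsto.mul_const this (b := μ (dq 0 (idx 0 x))) (Or.inl (by simp))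
    rw [ENNReal.top_mul (h.dpos _ _)] at h2
    exact (h2.eventually (lt_mem_nhds hB.lt_top)).exists
  obtain ⟨j, hj⟩ := hlim
  refine ⟨-j, fun k hk => ?_⟩
  by_contra hlt
  push Not at hlt
  have h3 := h.grow hn x 0 j
  rw [zero_sub] at h3
  have h4 : μ (dq (-(j:ℤ)) (idx (-(j:ℤ)) x)) ≤ μ (dq k (idx k x)) :=
    measure_mono (dq_sub_dq hlt.le x)
  exact absurd (hj.trans_le (h3.trans (h4.trans hk))) (lt_irrefl _)

/-- predicates with comparison to a finite measure are bounded below -/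
lemma RA.bddB (hn : 0 < n) (h : RA μ p C) (lam : Measure (ESp n)) (hl : lam univ ≠ ⊤) (s : ℝ≥0∞)
    (hs : s ≠ ⊤) (P : ℤ → (Fin n → ℤ) → Prop) (hP : ∀ k z, P k z → μ (dq k z) ≤ s * lam (dq k z)) :
    BddB P := by
  intro x
  obtain ⟨b, hb⟩ := h.unbdd hn x (ENNReal.mul_ne_top hs hl)
  refine ⟨b, fun k hk => hb k ((hP _ _ hk).trans ?_)⟩
  gcongr
  exact subset_univ _

end

end

section

section
variable {n : ℕ} {ν : Measure (ESp n)} {p : ℕ} {C : ℝ≥0∞}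

lemma rhi_aux (h : RA ν p C) (k0 : ℤ) (J : Set (ESp n))
    (hJ : ∀ x ∈ J, dq k0 (idx k0 x) ⊆ J) (N : ℕ) :
    ∀ F ⊆ J, MeasurableSet F → (∀ x ∈ F, ∃ k, dq k (idx k x) ⊆ F) →
      (2 ^ (n+1)) ^ N * volume F ≤ dvol n k0 →
      (1 + (C * 2 ^ p)⁻¹) ^ N * ν F ≤ ν J := by
  induction N with
  | zero => 
    intro F hF _ _ _
    simpa using measure_mono hF
  | succ N ih =>
    intro F hF hm hd hv
    set P : ℤ → (Fin n → ℤ) → Prop := fun k z =>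
      k0 ≤ k ∧ dvol n k < 2 ^ (n+1) * volume (F ∩ dq k z) with hP
    have hb : BddB P := fun x => ⟨k0, fun k hk => hk.1⟩
    have hFt : volume F ≠ ⊤ := by
      intro ht
      rw [ht, ENNReal.mul_top (by simp)] at hv
      exact dvol_ne_top _ _ (top_le_iff.1 hv)
    set U : Set (ESp n) := ⋃ I ∈ Mx P, dq I.1 I.2 with hU
    have hUm : MeasurableSet U :=
      MeasurableSet.biUnion (Set.to_countable _) (fun _ _ => meas_dq _ _)
    have hFU : F ⊆ U := by
      intro x hx
      obtain ⟨k, hk⟩ := hd x hx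
      have hk' : dq (max k k0) (idx (max k k0) x) ⊆ F :=
        (dq_sub_dq (le_max_left _ _) x).trans hk
      have hPx : P (max k k0) (idx (max k k0) x) := by
        refine ⟨le_max_right _ _, ?_⟩
        rw [inter_eq_self_of_subset_right hk', vol_dq]
        have h1 : (1:ℝ≥0∞) < 2 ^ (n+1) := one_lt_pow₀ (by norm_num) (by omega)
        calc dvol n (max k k0) = 1 * dvol n (max k k0) := by simp
          _ < 2 ^ (n+1) * dvol n (max k k0) :=
            ENNReal.mul_lt_mul_left (dvol_ne_zero _ _) (dvol_ne_top _ _) h1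
      obtain ⟨l, _, hl⟩ := Mx_exists hb hPx
      simp only [hU, mem_iUnion]
      exact ⟨_, hl, mem_dq l x⟩
    have hUJ : U ⊆ J := by
      intro y hy
      simp only [hU, mem_iUnion] at hy
      obtain ⟨I, hI, hy⟩ := hy
      have hne : (F ∩ dq I.1 I.2).Nonempty := by
        by_contra hne
        rw [not_nonempty_iff_eq_empty] at hne
        have := hI.1.2
        rw [hne] at this
        simp at this
      obtain ⟨x, hxF, hxI⟩ := hne
      refine hJ x (hF hxF) ?_
      exact (idx_mono hI.1.1 (hy.trans hxI.symm) : idx k0 y = idx k0 x)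
    have hUd : ∀ x ∈ U, ∃ k, dq k (idx k x) ⊆ U := by
      intro x hx
      simp only [hU, mem_iUnion] at hx
      obtain ⟨I, hI, hx⟩ := hx
      refine ⟨I.1, ?_⟩
      have : idx I.1 x = I.2 := hx
      rw [this]
      exact subset_biUnion_of_mem (u := fun I : ℤ × (Fin n → ℤ) => dq I.1 I.2) hI
    have hUv : volume U ≤ 2 ^ (n+1) * volume F := by
      rw [hU, Mx_sum]
      calc ∑' I : Mx P, volume (dq I.1.1 I.1.2)
          ≤ ∑' I : Mx P, 2 ^ (n+1) * (volume.restrict F) (dq I.1.1 I.1.2) := by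
            refine ENNReal.tsum_le_tsum fun I => ?_
            rw [Measure.restrict_apply (meas_dq _ _), vol_dq, inter_comm]
            exact I.2.1.2.le
        _ = 2 ^ (n+1) * ∑' I : Mx P, (volume.restrict F) (dq I.1.1 I.1.2) :=
            ENNReal.tsum_mul_left
        _ ≤ 2 ^ (n+1) * (volume.restrict F) univ := by gcongr; exact Mx_sum_le P _
        _ = _ := by simp
    have h1 := ih U hUJ hUm hUd (by
      refine le_trans ?_ hv
      rw [pow_succ ((2:ℝ≥0∞) ^ (n+1)) N, mul_assoc]
      gcongr)
    have h2 : (1 + (C * 2 ^ p)⁻¹) * ν F ≤ ν U := by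
      have e : ν F = ∑' I : Mx P, (ν.restrict F) (dq I.1.1 I.1.2) := by
        rw [← Mx_sum, ← hU, Measure.restrict_apply hUm, inter_eq_self_of_subset_right hFU]
      rw [e, ← ENNReal.tsum_mul_left, hU, Mx_sum]
      refine ENNReal.tsum_le_tsum fun I => ?_
      rw [Measure.restrict_apply (meas_dq _ _)]
      obtain ⟨⟨k, z⟩, hI⟩ := I
      have hI0 := hI.1
      simp only [hP] at hI0
      have hk : k0 ≠ k := by
        rintro rfl
        refine absurd (hI0.2.trans_le ?_) (lt_irrefl _)
        refine le_trans ?_ hv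
        rw [pow_succ' ((2:ℝ≥0∞) ^ (n+1)) N, mul_assoc]
        gcongr 2 ^ (n+1) * ?_
        calc volume (F ∩ dq k0 z) ≤ 1 * volume F := by
              rw [one_mul]; exact measure_mono inter_subset_left
          _ ≤ _ := by gcongr; exact one_le_pow₀ (one_le_pow₀ (by norm_num))
      obtain ⟨x, hx⟩ := nonempty_dq k z
      have hx' : idx k x = z := hx
      have hpar := hI.2 (k-1) (by simp) x hx
      simp only [hP, not_and, not_lt] at hpar
      have hpar := hpar (by have := hI0.1; omega)
      refine h.small k z inter_subset_left ((meas_dq _ _).inter hm) ?_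
      have hsub : dq k z ∩ F ⊆ F ∩ dq (k-1) (idx (k-1) x) := by
        rintro y ⟨hy1, hy2⟩
        refine ⟨hy2, ?_⟩
        exact dq_sub_dq (by omega : k - 1 ≤ k) x (by rw [hx']; exact hy1)
      rw [dvol_parent, pow_succ, mul_assoc] at hpar
      have hpar := cancel_left (by simp) (by simp) hpar
      refine le_trans ?_ hpar
      gcongr
    calc (1 + (C * 2 ^ p)⁻¹) ^ (N+1) * ν F = (1 + (C * 2 ^ p)⁻¹) ^ N * ((1 + (C * 2 ^ p)⁻¹) * ν F) := by ring
      _ ≤ (1 + (C * 2 ^ p)⁻¹) ^ N * ν U := by gcongr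
      _ ≤ ν J := h1

/-- A quantitative absolute continuity property. -/
lemma rhi (h : RA ν p C) (k0 : ℤ) (z : Fin n → ℤ) (N : ℕ) {F : Set (ESp n)} (hF : F ⊆ tq k0 z)
    (hv : (2 ^ (n+1)) ^ N * volume F < dvol n k0) :
    (1 + (C * 2 ^ p)⁻¹) ^ N * ν F ≤ ν (tq k0 z) := by
  have c0 : ((2:ℝ≥0∞) ^ (n+1)) ^ N ≠ 0 := by simp
  have ct : ((2:ℝ≥0∞) ^ (n+1)) ^ N ≠ ⊤ := ENNReal.pow_ne_top (by simp)
  obtain ⟨G, hFG, hG, hGv⟩ := Set.exists_isOpen_lt_of_lt (μ := volume) F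
    (dvol n k0 / (2 ^ (n+1)) ^ N) (by
      rw [ENNReal.lt_div_iff_mul_lt (Or.inl c0) (Or.inl ct), mul_comm]; exact hv)
  rw [ENNReal.lt_div_iff_mul_lt (Or.inl c0) (Or.inl ct), mul_comm] at hGv
  have hJ : ∀ x ∈ tq k0 z, dq k0 (idx k0 x) ⊆ tq k0 z := by
    intro x hx y hy i
    have : idx k0 y = idx k0 x := hy
    rw [this]; exact hx i
  have := rhi_aux h k0 (tq k0 z) hJ N (G ∩ tq k0 z) inter_subset_right
    (hG.measurableSet.inter (meas_tq _ _)) (by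
      rintro x ⟨hx1, hx2⟩
      obtain ⟨k, hk, hk'⟩ := open_dyadic hG hx1 k0
      exact ⟨k, subset_inter hk' ((dq_sub_dq hk x).trans (hJ x hx2))⟩) (by
      refine le_trans ?_ hGv.le
      gcongr
      exact inter_subset_left)
  refine le_trans ?_ this
  gcongr
  exact subset_inter hFG hF
end

end

section

section
variable {n : ℕ} {ν W μ : Measure (ESp n)} {p : ℕ} {C1 C2 : ℝ≥0∞}

/-- Calderon–Zygmund predicate -/
def PL (μ ν : Measure (ESp n)) (t : ℝ≥0∞) : ℤ → (Fin n → ℤ) → Prop :=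
  fun l z => t * ν (dq l z) < μ (dq l z)

lemma PL_anti {t t' : ℝ≥0∞} (h : t ≤ t') {l : ℤ} {z : Fin n → ℤ} (hP : PL μ ν t' l z) :
    PL μ ν t l z := by
  refine lt_of_le_of_lt ?_ hP
  gcongr

/-- union of selected cubes -/
def Om (μ ν : Measure (ESp n)) (t : ℝ≥0∞) : Set (ESp n) :=
  ⋃ (k : ℤ) (z : Fin n → ℤ) (_ : PL μ ν t k z), dq k z

lemma meas_Om (t : ℝ≥0∞) : MeasurableSet (Om μ ν t) :=
  MeasurableSet.iUnion fun _ => MeasurableSet.iUnion fun _ => MeasurableSet.iUnion fun _ =>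
    meas_dq _ _

lemma Om_anti {t t' : ℝ≥0∞} (h : t ≤ t') : Om μ ν t' ⊆ Om μ ν t := by
  intro x hx
  simp only [Om, mem_iUnion] at hx ⊢
  obtain ⟨k, z, hz, hx⟩ := hx
  exact ⟨k, z, PL_anti h hz, hx⟩

lemma PL_bdd (hn : 0 < n) (h : RA ν p C1) (hμ : μ univ ≠ ⊤) {t : ℝ≥0∞} (h0 : t ≠ 0) (ht : t ≠ ⊤) :
    BddB (PL μ ν t) := by
  refine h.bddB hn μ hμ t⁻¹ (by simpa using h0) _ fun k z hP => ?_
  rw [mul_comm, ← div_eq_mul_inv, ENNReal.le_div_iff_mul_le (Or.inl h0) (Or.inl ht), mul_comm]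
  exact hP.le

lemma tq_sum (m : Measure (ESp n)) (l : ℤ) (z0 : Fin n → ℤ) :
    m (tq l z0) = ∑' z : {z : Fin n → ℤ | ∀ i, |z i - z0 i| ≤ 1}, m (dq l z.1) := by
  have : tq l z0 = ⋃ z ∈ {z : Fin n → ℤ | ∀ i, |z i - z0 i| ≤ 1}, dq l z := by
    ext x
    simp only [mem_iUnion]
    constructor
    · intro hx
      exact ⟨idx l x, hx, mem_dq l x⟩
    · rintro ⟨z, hz, hx⟩
      have hx : idx l x = z := hx
      subst hx
      exact hz
  rw [this, measure_biUnion (Set.to_countable _) _ (fun _ _ => meas_dq _ _)]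
  intro z _ z' _ hne
  rw [Function.onFun, Set.disjoint_left]
  intro x hx hx'
  exact hne (hx.symm.trans hx')

lemma cover (h : RA ν 1 C1) {Q : Set (ESp n)} (hQ : IsCube Q) {x : ESp n} (hx : x ∈ Q)
    {s : ℝ≥0∞} (hs : s * ν Q < μ Q) :
    ∃ l z, x ∈ tq l z ∧ PL μ ν ((C1 * 6 ^ n)⁻¹ * s) l z := by
  obtain ⟨k, hk, hv⟩ := cube_in_tq hQ hx
  by_contra hcon
  push Not at hcon
  refine absurd hs (not_lt.2 ?_)
  have h1 : ν (tq k (idx k x)) ≤ C1 * 6 ^ n * ν Q := by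
    have h2 := h.le _ (tcl_cube k (idx k x)) Q (hk.trans (tq_sub_tcl _ _)) hQ.meas
    have hQ0 : volume Q ≠ 0 := by
      obtain ⟨c, r, hr, rfl⟩ := hQ
      have := vol_cq c r
      rw [cq] at this
      rw [this]
      exact pow_ne_zero _ (by simpa using hr)
    have hQt : volume Q ≠ ⊤ := by
      obtain ⟨c, r, hr, rfl⟩ := hQ
      have := vol_cq c r
      rw [cq] at this
      rw [this]
      exact ENNReal.pow_ne_top (by simp)
    simp only [pow_one] at h2
    apply cancel_left hQ0 hQt
    calc volume Q * ν (tq k (idx k x)) ≤ volume Q * ν (tcl k (idx k x)) := by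
          gcongr; exact tq_sub_tcl _ _
      _ ≤ _ := h2
      _ ≤ C1 * (6 ^ n * volume Q) * ν Q := by gcongr
      _ = _ := by ring
  have h0 : C1 * 6 ^ n ≠ 0 := mul_ne_zero h.C0 (by simp)
  have ht : C1 * 6 ^ n ≠ ⊤ := ENNReal.mul_ne_top h.Ct (by simp)
  calc μ Q ≤ μ (tq k (idx k x)) := measure_mono hk
    _ ≤ (C1 * 6 ^ n)⁻¹ * s * ν (tq k (idx k x)) := by
        rw [tq_sum, tq_sum, ← ENNReal.tsum_mul_left]
        refine ENNReal.tsum_le_tsum fun z => ?_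
        have := hcon k z.1 (by
          intro i
          have := z.2 i
          rwa [abs_sub_comm] at this)
        simpa [PL] using this
    _ ≤ (C1 * 6 ^ n)⁻¹ * s * (C1 * 6 ^ n * ν Q) := by gcongr
    _ = ((C1 * 6 ^ n)⁻¹ * (C1 * 6 ^ n)) * (s * ν Q) := by ring
    _ = s * ν Q := by rw [ENNReal.inv_mul_cancel h0 ht, one_mul]

lemma Mx_tq {P : ℤ → (Fin n → ℤ) → Prop} (hb : BddB P) {l : ℤ} {z : Fin n → ℤ} (hP : P l z)
    {x : ESp n} (hx : x ∈ tq l z) : ∃ I ∈ Mx P, x ∈ tq I.1 I.2 := by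
  obtain ⟨y, hy⟩ := nonempty_dq l z
  have hy : idx l y = z := hy
  subst hy
  obtain ⟨l', hl', hI⟩ := Mx_exists hb hP
  exact ⟨_, hI, fun i => idx_near hl' i (hx i)⟩

lemma parent_le (h : RA ν p C1) {t : ℝ≥0∞} {I : ℤ × (Fin n → ℤ)} (hI : I ∈ Mx (PL μ ν t)) :
    μ (dq I.1 I.2) ≤ t * (C1 * (2 ^ n) ^ p * ν (dq I.1 I.2)) := by
  obtain ⟨k, z⟩ := I
  obtain ⟨x, hx⟩ := nonempty_dq k z
  have hx' : idx k x = z := hx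
  have h1 := hI.2 (k-1) (by simp) x hx
  simp only [PL, not_lt] at h1
  subst hx'
  calc μ (dq k (idx k x)) ≤ μ (dq (k-1) (idx (k-1) x)) :=
        measure_mono (dq_sub_dq (by omega) x)
    _ ≤ _ := h1
    _ ≤ _ := by gcongr; exact h.parent k x

lemma sparse (hn : 0 < n) (h : RA ν 1 C1) (hW : RA W p C2) (hμ : μ univ ≠ ⊤) {t a : ℝ≥0∞}
    (h0 : t ≠ 0) (ht : t ≠ ⊤) (ha : 2 * C1 * C1 * 2 ^ n ≤ a) (ha1 : 1 ≤ a) (hat : a ≠ ⊤)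
    {I : ℤ × (Fin n → ℤ)} (hI : I ∈ Mx (PL μ ν t)) :
    W (dq I.1 I.2) ≤ C2 * 2 ^ p * W (dq I.1 I.2 \ Om μ ν (a * t)) := by
  have ha0 : a ≠ 0 := (zero_lt_one.trans_le ha1).ne'
  have hat0 : a * t ≠ 0 := mul_ne_zero ha0 h0
  have hatt : a * t ≠ ⊤ := ENNReal.mul_ne_top hat ht
  have key : ν (Om μ ν (a * t) ∩ dq I.1 I.2) ≤ (a * t)⁻¹ * μ (dq I.1 I.2) := by
    have := Mx_weak (PL μ ν (a * t)) (PL_bdd hn h hμ hat0 hatt) (μ.restrict (dq I.1 I.2))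
      (ν.restrict (dq I.1 I.2)) (a * t)⁻¹ (by
        intro k z hP
        rw [Measure.restrict_apply (meas_dq _ _), Measure.restrict_apply (meas_dq _ _)]
        by_cases hd : (dq k z ∩ dq I.1 I.2).Nonempty
        · obtain ⟨x, hx1, hx2⟩ := hd
          have hx1' : idx k x = z := hx1
          have hx2' : idx I.1 x = I.2 := hx2
          have hle : I.1 ≤ k := by
            by_contra hlt
            push Not at hlt
            refine hI.2 k hlt x hx2 ?_
            rw [hx1']
            exact PL_anti (by
              calc t = 1 * t := by simp
                _ ≤ a * t := by gcongr) hP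
          have hsub : dq k z ⊆ dq I.1 I.2 := by
            have := dq_sub_dq hle x
            rwa [hx1', hx2'] at this
          rw [inter_eq_self_of_subset_left hsub]
          rw [mul_comm, ← div_eq_mul_inv, ENNReal.le_div_iff_mul_le (Or.inl hat0) (Or.inl hatt),
            mul_comm]
          exact hP.le
        · rw [not_nonempty_iff_eq_empty] at hd
          simp [hd])
    rw [Measure.restrict_apply_univ] at this
    change (ν.restrict (dq I.1 I.2)) (Om μ ν (a * t)) ≤ _ at this
    rwa [Measure.restrict_apply (meas_Om _)] at this
  set F := Om μ ν (a * t) ∩ dq I.1 I.2 with hF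
  have hFm : MeasurableSet F := (meas_Om _).inter (meas_dq _ _)
  have h2 : 2 * volume F ≤ dvol n I.1 := by
    have h3 := h.dle I.1 I.2 (F := F) inter_subset_right hFm
    have h4 := parent_le h hI
    simp only [pow_one] at h3 h4
    apply cancel_left (h.dpos I.1 I.2) (h.dfin I.1 I.2)
    calc ν (dq I.1 I.2) * (2 * volume F) = 2 * (volume F * ν (dq I.1 I.2)) := by ring
      _ ≤ 2 * (C1 * dvol n I.1 * ((a * t)⁻¹ * (t * (C1 * 2 ^ n * ν (dq I.1 I.2))))) := by
          gcongr 2 * ?_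
          refine h3.trans ?_
          gcongr
          exact key.trans (by gcongr)
      _ = (2 * C1 * C1 * 2 ^ n) * ((a * t)⁻¹ * t) * (ν (dq I.1 I.2) * dvol n I.1) := by ring
      _ ≤ a * ((a * t)⁻¹ * t) * (ν (dq I.1 I.2) * dvol n I.1) := by gcongr
      _ = ((a * t)⁻¹ * (a * t)) * (ν (dq I.1 I.2) * dvol n I.1) := by ring
      _ = _ := by rw [ENNReal.inv_mul_cancel hat0 hatt, one_mul]
  have h5 := half_compl I.1 I.2 (F := F) inter_subset_right hFm h2
  have h6 := hW.half I.1 I.2 (F := dq I.1 I.2 \ F) sdiff_subset ((meas_dq _ _).diff hFm) h5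
  have e : dq I.1 I.2 \ F = dq I.1 I.2 \ Om μ ν (a * t) := by
    ext x; simp only [hF, mem_sdiff, mem_inter_iff]; tauto
  rwa [e] at h6

end

end

section

section
variable {n : ℕ} {ν W μ : Measure (ESp n)} {p : ℕ} {C1 C2 : ℝ≥0∞} {V : ESp n → ℝ≥0∞}

lemma W_le (hVm : Measurable V) (hWV : W = ν.withDensity V) {s : ℝ≥0∞} {D : Set (ESp n)}
    (hD : MeasurableSet D) : W (D ∩ {x | V x ≤ s}) ≤ s * ν (D ∩ {x | V x ≤ s}) := by
  have hm : MeasurableSet (D ∩ {x | V x ≤ s}) := hD.inter (measurableSet_le hVm measurable_const)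
  rw [hWV, withDensity_apply _ hm, ← setLIntegral_const]
  exact setLIntegral_mono measurable_const fun x hx => hx.2

lemma decay (hp : 0 < p) (h : RA ν 1 C1) (hW : RA W p C2) (hVm : Measurable V)
    (hWV : W = ν.withDensity V) {s t K : ℝ≥0∞} (hst : s ≤ K * t) {r r0 : ℕ}
    (hr0 : C2 * (3 ^ n) ^ p * (K * C1 * 3 ^ n) < ((2 ^ (n+1)) ^ p) ^ r0)
    {I : ℤ × (Fin n → ℤ)} (hI : PL μ ν t I.1 I.2)
    (hr : ((2 ^ (n+1)) ^ p) ^ r * μ (dq I.1 I.2) ≤ W (dq I.1 I.2)) :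
    (1 + (C1 * 2)⁻¹) ^ (r - r0) * W (tq I.1 I.2 ∩ {x | V x ≤ s}) ≤ 
      (K * C1 * 3 ^ n) * μ (dq I.1 I.2) := by
  set F := tq I.1 I.2 ∩ {x | V x ≤ s} with hF
  have hFm : MeasurableSet F := (meas_tq _ _).inter (measurableSet_le hVm measurable_const)
  have hWF : W F ≤ s * ν F := W_le hVm hWV (meas_tq _ _)
  have hst' : s * ν (tq I.1 I.2) ≤ (K * C1 * 3 ^ n) * μ (dq I.1 I.2) := by
    have h1 := h.tdoub I.1 I.2
    rw [pow_one] at h1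
    calc s * ν (tq I.1 I.2) ≤ (K * t) * (C1 * 3 ^ n * ν (dq I.1 I.2)) := by gcongr
      _ = (K * C1 * 3 ^ n) * (t * ν (dq I.1 I.2)) := by ring
      _ ≤ _ := by gcongr; exact hI.le
  suffices hsuff : (1 + (C1 * 2)⁻¹) ^ (r - r0) * ν F ≤ ν (tq I.1 I.2) by
    calc (1 + (C1 * 2)⁻¹) ^ (r - r0) * W F ≤ (1 + (C1 * 2)⁻¹) ^ (r - r0) * (s * ν F) := by gcongr
      _ = s * ((1 + (C1 * 2)⁻¹) ^ (r - r0) * ν F) := by ring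
      _ ≤ s * ν (tq I.1 I.2) := by gcongr
      _ ≤ _ := hst'
  rcases lt_or_ge r r0 with hlt | hge
  · rw [Nat.sub_eq_zero_of_le hlt.le, pow_zero, one_mul]
    exact measure_mono inter_subset_left
  · have h1 := rhi h I.1 I.2 (r - r0) (F := F) inter_subset_left ?_
    · rwa [pow_one] at h1
    set b : ℝ≥0∞ := (2 ^ (n+1)) ^ p with hb
    have hb0 : b ≠ 0 := by simp [hb]
    have hbt : b ≠ ⊤ := by rw [hb]; exact ENNReal.pow_ne_top (by simp)
    have h2 := hW.tle I.1 I.2 (F := F) inter_subset_left hFm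
    have hWt0 : W (tq I.1 I.2) ≠ 0 := fun h0 =>
      hW.dpos I.1 I.2 (measure_mono_null (dq_sub_tq _ _) h0)
    have h3 : b ^ r * volume F ^ p ≤ (C2 * (3 ^ n) ^ p * (K * C1 * 3 ^ n)) * dvol n I.1 ^ p := by
      apply cancel_left hWt0 (hW.tfin _ _)
      calc W (tq I.1 I.2) * (b ^ r * volume F ^ p) = b ^ r * (volume F ^ p * W (tq I.1 I.2)) := by
            ring
        _ ≤ b ^ r * (C2 * (3 ^ n * dvol n I.1) ^ p * W F) := by gcongr
        _ ≤ b ^ r * (C2 * (3 ^ n * dvol n I.1) ^ p * (K * C1 * 3 ^ n * μ (dq I.1 I.2))) := by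
            gcongr
            refine hWF.trans (le_trans ?_ hst')
            gcongr
            exact inter_subset_left
        _ = (C2 * (3 ^ n) ^ p * (K * C1 * 3 ^ n)) * dvol n I.1 ^ p * (b ^ r * μ (dq I.1 I.2)) := by
            rw [mul_pow]; ring
        _ ≤ (C2 * (3 ^ n) ^ p * (K * C1 * 3 ^ n)) * dvol n I.1 ^ p * W (tq I.1 I.2) := by
            gcongr
            exact hr.trans (measure_mono (dq_sub_tq _ _))
        _ = _ := by ring
    have h4 : b ^ r * volume F ^ p < b ^ r0 * dvol n I.1 ^ p := by
      refine h3.trans_lt ?_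
      exact ENNReal.mul_lt_mul_left (pow_ne_zero _ (dvol_ne_zero _ _))
        (ENNReal.pow_ne_top (dvol_ne_top _ _)) hr0
    have e : b ^ r = b ^ r0 * b ^ (r - r0) := by rw [← pow_add]; congr 1; omega
    rw [e, mul_assoc] at h4
    have h5 : b ^ (r - r0) * volume F ^ p < dvol n I.1 ^ p := by
      by_contra hc
      push Not at hc
      exact absurd h4 (not_lt.2 (mul_le_mul' le_rfl hc))
    have e2 : b ^ (r - r0) * volume F ^ p = ((2 ^ (n+1)) ^ (r - r0) * volume F) ^ p := by
      rw [hb, mul_pow, ← pow_mul, ← pow_mul, ← pow_mul, ← pow_mul]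
      congr 2; ring
    rw [e2] at h5
    by_contra hc
    push Not at hc
    exact absurd h5 (not_lt.2 (pow_le_pow_left' hc p))

theorem core (hn : 0 < n) (hp : 0 < p) (h : RA ν 1 C1) (hW : RA W p C2) (hVm : Measurable V)
    (hVt : ∀ x, V x ≠ ⊤) (hWV : W = ν.withDensity V) :
    ∃ K : ℝ≥0∞, K ≠ ⊤ ∧ ∀ μ : Measure (ESp n), μ univ ≠ ⊤ →
      W {x | ∃ Q, IsCube Q ∧ x ∈ Q ∧ V x * ν Q < μ Q} ≤ K * μ univ := by
  set a : ℝ≥0∞ := 2 * C1 * C1 * 2 ^ n + 2 with ha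
  have ha2 : 2 * C1 * C1 * 2 ^ n ≤ a := le_self_add
  have ha1 : 1 < a := lt_of_lt_of_le (by norm_num) le_add_self
  have hat : a ≠ ⊤ := by
    have := h.Ct
    rw [ha]; finiteness
  have ha0 : a ≠ 0 := (zero_lt_one.trans ha1).ne'
  set c0 : ℝ≥0∞ := (C1 * 6 ^ n)⁻¹ with hc0
  have hc00 : c0 ≠ 0 := ENNReal.inv_ne_zero.2 (ENNReal.mul_ne_top h.Ct (by simp))
  have hc0t : c0 ≠ ⊤ := ENNReal.inv_ne_top.2 (mul_ne_zero h.C0 (by simp))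
  set b : ℝ≥0∞ := (2 ^ (n+1)) ^ p with hb
  have hb0 : b ≠ 0 := by simp [hb]
  have hbt : b ≠ ⊤ := by rw [hb]; exact ENNReal.pow_ne_top (by simp)
  have hb1 : 1 < b := one_lt_pow₀ (one_lt_pow₀ (by norm_num) (by omega)) (by omega)
  set K : ℝ≥0∞ := a * c0⁻¹ with hK
  have hKt : K ≠ ⊤ := ENNReal.mul_ne_top hat (ENNReal.inv_ne_top.2 hc00)
  set K1 : ℝ≥0∞ := K * C1 * 3 ^ n with hK1
  have hK1t : K1 ≠ ⊤ := by
    have := h.Ct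
    rw [hK1]; finiteness
  have hK2t : C2 * (3 ^ n) ^ p * K1 ≠ ⊤ := by
    have := hW.Ct
    finiteness
  obtain ⟨r0, hr0⟩ : ∃ r0, C2 * (3 ^ n) ^ p * K1 < b ^ r0 :=
    ((ENNReal.tendsto_pow_atTop_nhds_top_iff.2 hb1).eventually (lt_mem_nhds hK2t.lt_top)).exists
  set g : ℝ≥0∞ := 1 + (C1 * 2)⁻¹ with hg
  have hg1 : 1 < g := ENNReal.lt_add_right (by simp)
    (ENNReal.inv_ne_zero.2 (ENNReal.mul_ne_top h.Ct (by simp)))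
  have hg0 : g ≠ 0 := (zero_lt_one.trans hg1).ne'
  have hgt : g ≠ ⊤ := by
    rw [hg]
    exact ENNReal.add_ne_top.2 ⟨by simp, ENNReal.inv_ne_top.2 (mul_ne_zero h.C0 (by simp))⟩
  set S : ℝ≥0∞ := ∑' r : ℕ, (g⁻¹) ^ (r - r0) with hS
  have hSt : S ≠ ⊤ := by
    rw [hS, ← ENNReal.summable.sum_add_tsum_nat_add' (k := r0) (f := fun r => (g⁻¹) ^ (r - r0))]
    refine ENNReal.add_ne_top.2 ⟨?_, ?_⟩
    · refine ENNReal.sum_ne_top.2 fun i _ => ENNReal.pow_ne_top (ENNReal.inv_ne_top.2 hg0)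
    · simp only [Nat.add_sub_cancel]
      rw [ENNReal.tsum_geometric]
      refine ENNReal.inv_ne_top.2 ?_
      rw [Ne, tsub_eq_zero_iff_le, not_le]
      exact ENNReal.inv_lt_one.2 hg1
  refine ⟨C2 * (3 ^ n) ^ p + S * (K1 * (C2 * 2 ^ p) * b), ?_, ?_⟩
  · have := hW.Ct
    finiteness
  intro μ hμ
  have hak0 : ∀ k : ℤ, c0 * a ^ k ≠ 0 := fun k => mul_ne_zero hc00 (ENNReal.zpow_pos ha0 hat k).ne'
  have hakt : ∀ k : ℤ, c0 * a ^ k ≠ ⊤ :=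
    fun k => ENNReal.mul_ne_top hc0t (ENNReal.zpow_lt_top ha0 hat k).ne
  set R : ℝ≥0∞ → ℤ → (Fin n → ℤ) → Prop := fun s l z => W (dq l z) < s * μ (dq l z) with hR
  have hRb : ∀ s ≠ ⊤, BddB (R s) := fun s hs =>
    hW.bddB hn μ hμ s hs _ (fun k z hP => le_of_lt hP)
  set cl : ℕ → Set (ℤ × (ℤ × (Fin n → ℤ))) := fun r =>
    {J | J.2 ∈ Mx (PL μ ν (c0 * a ^ J.1)) ∧ b ^ r * μ (dq J.2.1 J.2.2) ≤ W (dq J.2.1 J.2.2) ∧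
      R (b ^ (r+1)) J.2.1 J.2.2} with hcl
  set T : ℤ × (ℤ × (Fin n → ℤ)) → Set (ESp n) := fun J =>
    tq J.2.1 J.2.2 ∩ {x | V x ≤ a ^ (J.1 + 1)} with hT
  set A : Set (ESp n) := ⋃ I ∈ Mx (R 1), tq I.1 I.2 with hA
  set B : ℕ → Set (ESp n) := fun r => ⋃ J ∈ cl r, T J with hB
  have hcover : {x | ∃ Q, IsCube Q ∧ x ∈ Q ∧ V x * ν Q < μ Q} ⊆
      {x | V x ≤ 0} ∪ (A ∪ ⋃ r, B r) := by
    rintro x ⟨Q, hQ, hxQ, hlt⟩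
    by_cases hx0 : V x = 0
    · left; exact hx0.le
    right
    obtain ⟨k, hk1, hk2⟩ := ENNReal.exists_mem_Ioc_zpow hx0 (hVt x) ha1 hat
    have hlt' : a ^ k * ν Q < μ Q := lt_of_le_of_lt (by gcongr) hlt
    obtain ⟨l, z, hxl, hP⟩ := cover h hQ hxQ hlt'
    obtain ⟨I, hI, hxI⟩ := Mx_tq (PL_bdd hn h hμ (hak0 k) (hakt k)) hP hxl
    by_cases hR1 : R 1 I.1 I.2
    · left
      obtain ⟨I', hI', hxI'⟩ := Mx_tq (hRb 1 (by simp)) hR1 hxI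
      simp only [hA, mem_iUnion]
      exact ⟨I', hI', hxI'⟩
    · right
      have hμ0 : μ (dq I.1 I.2) ≠ 0 := (lt_of_le_of_lt zero_le hI.1).ne'
      have hex : ∃ r : ℕ, W (dq I.1 I.2) < b ^ r * μ (dq I.1 I.2) := by
        have h2 := ENNReal.Tendsto.mul_const (ENNReal.tendsto_pow_atTop_nhds_top_iff.2 hb1)
          (b := μ (dq I.1 I.2)) (Or.inl (by simp))
        rw [ENNReal.top_mul hμ0] at h2
        exact (h2.eventually (lt_mem_nhds (hW.dfin I.1 I.2).lt_top)).exists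
      classical
      have hs := Nat.find_spec hex
      have hm := fun r => Nat.find_min hex (m := r)
      generalize Nat.find hex = r at hs hm
      cases r with
      | zero => exact absurd (by simpa [hR] using hs) hR1
      | succ r =>
        simp only [mem_iUnion, hB]
        exact ⟨r, (k, I), ⟨hI, not_lt.1 (hm r (by simp)), hs⟩, hxI, hk2⟩
  have hW0 : W {x | V x ≤ 0} = 0 := by
    have := W_le (ν := ν) (W := W) hVm hWV (s := 0) MeasurableSet.univ
    simpa using this
  have hWA : W A ≤ C2 * (3 ^ n) ^ p * μ univ := by
    calc W A ≤ ∑' I : Mx (R 1), W (tq I.1.1 I.1.2) := measure_biUnion_le _ (Set.to_countable _) _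
      _ ≤ ∑' I : Mx (R 1), C2 * (3 ^ n) ^ p * μ (dq I.1.1 I.1.2) := by
          refine ENNReal.tsum_le_tsum fun I => ?_
          refine (hW.tdoub _ _).trans ?_
          have h9 : W (dq I.1.1 I.1.2) ≤ μ (dq I.1.1 I.1.2) := by
            simpa [hR] using (I.2.1).le
          exact mul_le_mul' le_rfl h9
      _ = C2 * (3 ^ n) ^ p * ∑' I : Mx (R 1), μ (dq I.1.1 I.1.2) := ENNReal.tsum_mul_left
      _ ≤ _ := by gcongr; exact Mx_sum_le _ _
  have hWB : ∀ r, W (B r) ≤ (g⁻¹) ^ (r - r0) * (K1 * (C2 * 2 ^ p) * b * μ univ) := by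
    intro r
    set E : ℤ × (ℤ × (Fin n → ℤ)) → Set (ESp n) := fun J =>
      dq J.2.1 J.2.2 \ Om μ ν (a * (c0 * a ^ J.1)) with hE
    have hlev : ∀ k : ℤ, a * (c0 * a ^ k) = c0 * a ^ (k+1) := by
      intro k
      rw [ENNReal.zpow_add ha0 hat, zpow_one]; ring
    have hdisj : (cl r).PairwiseDisjoint E := by
      have key : ∀ J ∈ cl r, ∀ J' ∈ cl r, J.1 < J'.1 → ∀ x ∈ E J, x ∉ E J' := by
        intro J hJ J' hJ' hlt x hx hx'
        refine hx.2 ?_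
        have h1 : x ∈ Om μ ν (c0 * a ^ J'.1) := by
          simp only [Om, mem_iUnion]
          exact ⟨_, _, hJ'.1.1, hx'.1⟩
        refine Om_anti ?_ h1
        rw [hlev]
        gcongr
        · exact ha1.le
        · omega
      intro J hJ J' hJ' hne
      rw [Function.onFun, Set.disjoint_left]
      intro x hx hx'
      rcases lt_trichotomy J.1 J'.1 with hlt | heq | hlt
      · exact key J hJ J' hJ' hlt x hx hx'
      · apply hne
        obtain ⟨k, I⟩ := J
        obtain ⟨k', I'⟩ := J'
        simp only at heq
        subst heq
        have e : I = I' := Mx_eq hJ.1 hJ'.1 hx.1 hx'.1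
        rw [e]
      · exact key J' hJ' J hJ hlt x hx' hx
    have hEsum : ∑' J : cl r, W (E J.1) ≤ b ^ (r+1) * μ univ := by
      rw [← measure_biUnion (Set.to_countable _) hdisj
        (fun J _ => (meas_dq _ _).diff (meas_Om _))]
      refine le_trans (measure_mono ?_) (Mx_weak (R (b ^ (r+1)))
        (hRb _ (ENNReal.pow_ne_top hbt)) μ W (b ^ (r+1)) (fun k z hP => le_of_lt hP))
      intro x hx
      simp only [mem_iUnion] at hx ⊢
      obtain ⟨J, hJ, hx⟩ := hx
      exact ⟨_, _, hJ.2.2, hx.1⟩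
    have hterm : ∀ J ∈ cl r, W (T J) ≤
        (g⁻¹) ^ (r - r0) * (K1 * (C2 * 2 ^ p)) * (b ^ r)⁻¹ * W (E J) := by
      intro J hJ
      have h1 := decay hp h hW hVm hWV (s := a ^ (J.1 + 1)) (t := c0 * a ^ J.1) (K := K) (by
        rw [ENNReal.zpow_add ha0 hat, zpow_one, hK]
        calc a ^ J.1 * a = (c0⁻¹ * c0) * (a ^ J.1 * a) := by
              rw [ENNReal.inv_mul_cancel hc00 hc0t, one_mul]
          _ = a * c0⁻¹ * (c0 * a ^ J.1) := by ring
          _ ≤ _ := le_rfl) hr0 hJ.1.1 hJ.2.1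
      have h2 := sparse hn h hW hμ (hak0 J.1) (hakt J.1) ha2 ha1.le hat hJ.1
      have hgr0 : g ^ (r - r0) ≠ 0 := pow_ne_zero _ hg0
      have hgrt : g ^ (r - r0) ≠ ⊤ := ENNReal.pow_ne_top hgt
      have hbr0 : b ^ r ≠ 0 := pow_ne_zero _ hb0
      have hbrt : b ^ r ≠ ⊤ := ENNReal.pow_ne_top hbt
      have h3 : μ (dq J.2.1 J.2.2) ≤ (b ^ r)⁻¹ * W (dq J.2.1 J.2.2) := by
        rw [← ENNReal.mul_le_iff_le_inv hbr0 hbrt]; exact hJ.2.1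
      have h4 : W (T J) ≤ (g ^ (r - r0))⁻¹ * (K1 * μ (dq J.2.1 J.2.2)) := by
        rw [← ENNReal.mul_le_iff_le_inv hgr0 hgrt]; exact h1
      calc W (T J) ≤ _ := h4
        _ ≤ (g ^ (r - r0))⁻¹ * (K1 * ((b ^ r)⁻¹ * (C2 * 2 ^ p * W (E J)))) := by
            gcongr
            exact h3.trans (by gcongr)
        _ = _ := by rw [ENNReal.inv_pow (a := g)]; ring
    calc W (B r) ≤ ∑' J : cl r, W (T J.1) := measure_biUnion_le _ (Set.to_countable _) _
      _ ≤ ∑' J : cl r, (g⁻¹) ^ (r - r0) * (K1 * (C2 * 2 ^ p)) * (b ^ r)⁻¹ * W (E J.1) :=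
          ENNReal.tsum_le_tsum fun J => hterm J.1 J.2
      _ = (g⁻¹) ^ (r - r0) * (K1 * (C2 * 2 ^ p)) * (b ^ r)⁻¹ * ∑' J : cl r, W (E J.1) :=
          ENNReal.tsum_mul_left
      _ ≤ (g⁻¹) ^ (r - r0) * (K1 * (C2 * 2 ^ p)) * (b ^ r)⁻¹ * (b ^ (r+1) * μ univ) := by gcongr
      _ = (g⁻¹) ^ (r - r0) * (K1 * (C2 * 2 ^ p) * b * μ univ) * ((b ^ r)⁻¹ * b ^ r) := by ring
      _ = _ := by
          rw [ENNReal.inv_mul_cancel (pow_ne_zero _ hb0) (ENNReal.pow_ne_top hbt), mul_one]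
  calc W {x | ∃ Q, IsCube Q ∧ x ∈ Q ∧ V x * ν Q < μ Q} ≤ W ({x | V x ≤ 0} ∪ (A ∪ ⋃ r, B r)) :=
        measure_mono hcover
    _ ≤ W {x | V x ≤ 0} + (W A + W (⋃ r, B r)) :=
        (measure_union_le _ _).trans (by gcongr; exact measure_union_le _ _)
    _ ≤ 0 + (C2 * (3 ^ n) ^ p * μ univ +
          ∑' r, (g⁻¹) ^ (r - r0) * (K1 * (C2 * 2 ^ p) * b * μ univ)) := by
        rw [hW0]
        gcongr
        exact (measure_iUnion_le _).trans (ENNReal.tsum_le_tsum hWB)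
    _ = _ := by rw [ENNReal.tsum_mul_right, ← hS]; ring

end

end

section

lemma cube_vol_ne {n : ℕ} {Q : Set (ESp n)} (h : IsCube Q) : volume Q ≠ 0 ∧ volume Q ≠ ⊤ := by
  obtain ⟨c, l, hl, rfl⟩ := h
  have := vol_cq c l
  rw [cq] at this
  rw [this]
  refine ⟨pow_ne_zero _ ?_, ENNReal.pow_ne_top ENNReal.ofReal_ne_top⟩
  simpa using hl

lemma RA_mk {n : ℕ} {N : ESp n → ℝ≥0∞} (hN : Measurable N) (hNt : ∀ x, N x ≠ ⊤)
    (hpos : ∀ᵐ x ∂(volume : Measure (ESp n)), N x ≠ 0) (p : ℕ) (C : ℝ≥0∞) (hC : C ≠ ⊤)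
    (hle : ∀ Q, IsCube Q → ∀ F ⊆ Q, MeasurableSet F →
      volume F ^ p * ∫⁻ x in Q, N x ≤ C * volume Q ^ p * ∫⁻ x in F, N x) :
    RA (volume.withDensity N) p (C + 1) := by
  have hle' : ∀ Q, IsCube Q → ∀ F ⊆ Q, MeasurableSet F →
      volume F ^ p * volume.withDensity N Q ≤ (C+1) * volume Q ^ p * volume.withDensity N F := by
    intro Q hQ F hF hFm
    rw [withDensity_apply _ hQ.meas, withDensity_apply _ hFm]
    refine (hle Q hQ F hF hFm).trans ?_
    gcongr
    exact le_self_add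
  refine ⟨hle', ?_, ?_, by simp, by finiteness⟩
  · intro Q hQ htop
    obtain ⟨hv0, hvt⟩ := cube_vol_ne hQ
    have hun : (⋃ k : ℕ, Q ∩ {x | N x ≤ k}) = Q := by
      ext x
      simp only [mem_iUnion, mem_inter_iff, exists_and_left, and_iff_left_iff_imp]
      intro _
      obtain ⟨k, hk⟩ := ENNReal.exists_nat_gt (hNt x)
      exact ⟨k, hk.le⟩
    have : ∃ k : ℕ, volume (Q ∩ {x | N x ≤ k}) ≠ 0 := by
      by_contra hc
      push Not at hc
      apply hv0
      rw [← hun]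
      exact measure_iUnion_null hc
    obtain ⟨k, hk⟩ := this
    have hFm : MeasurableSet (Q ∩ {x | N x ≤ k}) :=
      hQ.meas.inter (measurableSet_le hN measurable_const)
    have h1 := hle' Q hQ _ inter_subset_left hFm
    have h2 : volume.withDensity N (Q ∩ {x | N x ≤ k}) ≤ k * volume Q := by
      rw [withDensity_apply _ hFm]
      calc ∫⁻ x in Q ∩ {x | N x ≤ k}, N x ≤ ∫⁻ x in Q ∩ {x | N x ≤ k}, (k : ℝ≥0∞) :=
            setLIntegral_mono measurable_const (fun x hx => hx.2)
        _ = k * volume (Q ∩ {x | N x ≤ k}) := setLIntegral_const _ _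
        _ ≤ k * volume Q := mul_le_mul' le_rfl (measure_mono inter_subset_left)
    rw [htop, ENNReal.mul_top (pow_ne_zero _ hk), top_le_iff] at h1
    refine absurd h1 (ENNReal.mul_ne_top (by finiteness) (ne_top_of_le_ne_top ?_ h2))
    finiteness
  · intro F hF hv h0
    apply hv
    rw [withDensity_apply_eq_zero hN] at h0
    refine le_antisymm ?_ zero_le
    rw [← h0]
    apply measure_mono_ae
    filter_upwards [hpos] with x hx hxF
    exact ⟨hx, hxF⟩

lemma ae_le_ess {n : ℕ} (g : ESp n → ℝ≥0∞) (Q : Set (ESp n)) :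
    ∀ᵐ x ∂(volume.restrict Q), essInf g (volume.restrict Q) ≤ g x := ae_essInf_le

lemma ess_ne_top {n : ℕ} {g : ESp n → ℝ≥0∞} (hg : ∀ x, g x ≠ ⊤) {Q : Set (ESp n)}
    (hQ : IsCube Q) : essInf g (volume.restrict Q) ≠ ⊤ := by
  intro h
  have h1 := ae_le_ess g Q
  rw [h] at h1
  have h2 : ∀ᵐ x ∂(volume.restrict Q), False := by
    filter_upwards [h1] with x hx
    exact hg x (top_le_iff.1 hx)
  rw [ae_iff] at h2
  simp at h2
  exact (cube_vol_ne hQ).1 h2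

/-- lower bound for integral -/
lemma lint_ge {n : ℕ} {g : ESp n → ℝ≥0∞} {e : ℝ≥0∞} {Q F : Set (ESp n)} (hFQ : F ⊆ Q)
    (h : ∀ᵐ x ∂(volume.restrict Q), e ≤ g x) : e * volume F ≤ ∫⁻ x in F, g x := by
  rw [← setLIntegral_const]
  exact lintegral_mono_ae (ae_restrict_of_ae_restrict_of_subset hFQ h)

lemma RA_A1 {n : ℕ} {w : ESp n → ℝ} (hw : Measurable w)
    (hp : ∀ᵐ x ∂(volume : Measure (ESp n)), 0 < w x) (h : IsA1 w) :
    ∃ p : ℕ, 0 < p ∧ ∃ C, RA (volume.withDensity (fun x => ENNReal.ofReal (w x))) p C := by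
  obtain ⟨C, hC, h⟩ := h
  refine ⟨1, one_pos, C + 1, RA_mk hw.ennreal_ofReal (fun _ => by finiteness) ?_ 1 C hC.ne ?_⟩
  · filter_upwards [hp] with x hx; simpa using hx
  intro Q hQ F hF hFm
  have h1 := h Q hQ
  obtain ⟨hv0, hvt⟩ := cube_vol_ne hQ
  rw [wMeas, mul_comm, ← div_eq_mul_inv, ENNReal.div_le_iff hv0 hvt] at h1
  have h2 := lint_ge hF (ae_le_ess (fun x => ENNReal.ofReal (w x)) Q)
  simp only [pow_one]
  calc _ ≤ volume F * (C * essInf (fun x => ENNReal.ofReal (w x)) (volume.restrict Q) * volume Q) :=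
        mul_le_mul' le_rfl h1
    _ = C * volume Q * (essInf (fun x => ENNReal.ofReal (w x)) (volume.restrict Q) * volume F) := by
        ring
    _ ≤ _ := mul_le_mul' le_rfl h2

lemma RA_Ap {n : ℕ} {w : ESp n → ℝ} (hw : Measurable w)
    (hp : ∀ᵐ x ∂(volume : Measure (ESp n)), 0 < w x) (r : ℝ) (hr : 1 < r) (h : IsAp w r) :
    ∃ p : ℕ, 0 < p ∧ ∃ C, RA (volume.withDensity (fun x => ENNReal.ofReal (w x))) p C := by
  obtain ⟨C, hC, h⟩ := h
  have hr0 : 0 < r := by linarith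
  have hr1 : 0 < r - 1 := by linarith
  have hk : r ≤ (⌈r⌉₊ : ℝ) := Nat.le_ceil r
  refine ⟨⌈r⌉₊, Nat.ceil_pos.2 hr0, C + 1,
    RA_mk hw.ennreal_ofReal (fun _ => by finiteness) ?_ _ C hC.ne ?_⟩
  · filter_upwards [hp] with x hx; simpa using hx
  intro Q hQ F hF hFm
  have h1 := h Q hQ
  obtain ⟨hv0, hvt⟩ := cube_vol_ne hQ
  have hFt : volume F ≠ ⊤ := ne_top_of_le_ne_top hvt (measure_mono hF)
  set g : ESp n → ℝ≥0∞ := fun x => ENNReal.ofReal (w x) with hg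
  have hgm : Measurable g := hw.ennreal_ofReal
  set S := ∫⁻ x in Q, g x ^ (1 - r / (r-1)) with hS
  have hW : wMeas w Q = ∫⁻ x in Q, g x := rfl
  rw [hW] at h1
  set WQ := ∫⁻ x in Q, g x with hWQ
  set WF := ∫⁻ x in F, g x with hWF
  have h2 : WQ * S ^ (r-1) ≤ C * volume Q ^ r := by
    have e : volume Q ^ r * ((volume Q)⁻¹ * WQ * ((volume Q)⁻¹ * S) ^ (r-1)) = WQ * S ^ (r-1) := by
      rw [ENNReal.mul_rpow_of_nonneg _ _ hr1.le, ENNReal.inv_rpow]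
      have e1 : volume Q ^ r = volume Q * volume Q ^ (r-1) := by
        conv_rhs => rw [← ENNReal.rpow_one (volume Q), ← ENNReal.rpow_mul, one_mul,
          ← ENNReal.rpow_add _ _ hv0 hvt]
        congr 1; ring
      rw [e1]
      have e2 : volume Q * (volume Q)⁻¹ = 1 := ENNReal.mul_inv_cancel hv0 hvt
      have e3 : volume Q ^ (r-1) * (volume Q ^ (r-1))⁻¹ = 1 :=
        ENNReal.mul_inv_cancel (by simp [hv0, hvt]) (by finiteness)
      calc _ = (volume Q * (volume Q)⁻¹) * (volume Q ^ (r-1) * (volume Q ^ (r-1))⁻¹) *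
            (WQ * S ^ (r-1)) := by ring
        _ = _ := by rw [e2, e3]; simp
    rw [← e, mul_comm C]
    exact mul_le_mul' le_rfl h1
  have hconj : r.HolderConjugate (r / (r-1)) := by
    rw [Real.holderConjugate_iff]
    refine ⟨hr, ?_⟩
    field_simp; ring
  have h3 : volume F ≤ WF ^ (1/r) * S ^ (1/(r/(r-1))) := by
    have a1 : volume F = ∫⁻ x in F, ((fun x => g x ^ (1/r)) * (fun x => g x ^ (-(1/r)))) x := by
      rw [← setLIntegral_one]
      apply lintegral_congr_ae
      apply ae_restrict_of_ae
      filter_upwards [hp] with x hx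
      simp only [Pi.mul_apply]
      have hx0 : g x ≠ 0 := by simpa [hg] using hx
      have hxt : g x ≠ ⊤ := by simp [hg]
      rw [← ENNReal.rpow_add _ _ hx0 hxt]; simp
    rw [a1]
    refine (ENNReal.lintegral_mul_le_Lp_mul_Lq _ hconj (hgm.pow_const _).aemeasurable
      (hgm.pow_const _).aemeasurable).trans ?_
    apply mul_le_mul'
    · apply le_of_eq
      congr 1
      apply lintegral_congr
      intro x
      rw [← ENNReal.rpow_mul, one_div_mul_cancel hr0.ne', ENNReal.rpow_one]
    · apply ENNReal.rpow_le_rpow _ (by positivity)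
      rw [hS]
      refine le_trans (le_of_eq ?_) (lintegral_mono_set hF)
      apply lintegral_congr
      intro x
      rw [← ENNReal.rpow_mul]
      congr 1
      field_simp; ring
  have h4 : volume F ^ r ≤ WF * S ^ (r-1) := by
    calc volume F ^ r ≤ (WF ^ (1/r) * S ^ (1/(r/(r-1)))) ^ r := by gcongr
      _ = _ := by
        rw [ENNReal.mul_rpow_of_nonneg _ _ hr0.le, ← ENNReal.rpow_mul, ← ENNReal.rpow_mul,
          one_div_mul_cancel hr0.ne', ENNReal.rpow_one]
        congr 2
        field_simp
  have h5 : volume F ^ r * WQ ≤ C * volume Q ^ r * WF := by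
    calc _ ≤ WF * S ^ (r-1) * WQ := mul_le_mul' h4 le_rfl
      _ = WF * (WQ * S ^ (r-1)) := by ring
      _ ≤ WF * (C * volume Q ^ r) := mul_le_mul' le_rfl h2
      _ = _ := by ring
  have hsplit : ∀ x : ℝ≥0∞, x ^ ⌈r⌉₊ = x ^ ((⌈r⌉₊:ℝ) - r) * x ^ r := by
    intro x
    rw [← ENNReal.rpow_add_of_nonneg _ _ (by linarith) hr0.le, ← ENNReal.rpow_natCast]
    congr 1; ring
  rw [hsplit, hsplit]
  calc _ = volume F ^ ((⌈r⌉₊:ℝ) - r) * (volume F ^ r * WQ) := by ring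
    _ ≤ volume Q ^ ((⌈r⌉₊:ℝ) - r) * (C * volume Q ^ r * WF) :=
      mul_le_mul' (ENNReal.rpow_le_rpow (measure_mono hF) (by linarith)) h5
    _ = _ := by ring

lemma RA_Ainf {n : ℕ} {w : ESp n → ℝ} (hw : Measurable w)
    (hp : ∀ᵐ x ∂(volume : Measure (ESp n)), 0 < w x) (h : IsAinfty w) :
    ∃ p : ℕ, 0 < p ∧ ∃ C, RA (volume.withDensity (fun x => ENNReal.ofReal (w x))) p C := by
  rcases h with h | ⟨r, hr, h⟩
  · exact RA_A1 hw hp h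
  · exact RA_Ap hw hp r hr h

lemma A11_fact {n m : ℕ} (hm : 0 < m) {q : ℝ} (hq : 0 < q) {u : Fin m → ESp n → ℝ}
    (hu : ∀ i, IsWeight (u i)) (hA : A11 (fun i x => u i x ^ ((m : ℝ) * q))) :
    ∃ D : ℝ≥0∞, D ≠ ⊤ ∧ ∀ Q, IsCube Q → ∃ ε : Fin m → ℝ≥0∞, (∀ i, ε i ≠ 0 ∧ ε i ≠ ⊤) ∧
      (∀ i, ∀ᵐ x ∂(volume.restrict Q), ε i ≤ ENNReal.ofReal (u i x)) ∧
      ∫⁻ x in Q, ENNReal.ofReal (∏ i, u i x ^ q) ≤ D * volume Q * ∏ i, ε i ^ q := by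
  obtain ⟨C, hC, h⟩ := hA
  have hm0 : (0:ℝ) < m := by exact_mod_cast hm
  have hmq : (0:ℝ) < m * q := by positivity
  refine ⟨C ^ ((m:ℝ)⁻¹), by finiteness, fun Q hQ => ?_⟩
  obtain ⟨hv0, hvt⟩ := cube_vol_ne hQ
  have h1 := h Q hQ
  have e0 : ∀ x, ∏ i, (u i x ^ ((m : ℝ) * q)) ^ ((m:ℝ)⁻¹) = ∏ i, u i x ^ q := by
    intro x
    refine Finset.prod_congr rfl fun i _ => ?_
    rw [← Real.rpow_mul ((hu i).2.1 x)]
    congr 1; field_simp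
  simp only [e0] at h1
  set e : Fin m → ℝ≥0∞ := fun i =>
    essInf (fun x => ENNReal.ofReal (u i x ^ ((m:ℝ) * q))) (volume.restrict Q) with he
  have het : ∀ i, e i ≠ ⊤ := fun i => ess_ne_top (fun _ => ENNReal.ofReal_ne_top) hQ
  set I := ∫⁻ x in Q, ENNReal.ofReal (∏ i, u i x ^ q) with hI
  have hmeas : Measurable fun x => ENNReal.ofReal (∏ i, u i x ^ q) :=
    (Finset.measurable_prod _ fun i _ => (hu i).1.pow_const q).ennreal_ofReal
  have hpos : ∀ᵐ x ∂(volume : Measure (ESp n)), ∀ i, 0 < u i x := ae_all_iff.2 fun i => (hu i).2.2.1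
  have hI0 : I ≠ 0 := by
    intro h0
    rw [hI, lintegral_eq_zero_iff hmeas] at h0
    have h2 : ∀ᵐ x ∂(volume.restrict Q), False := by
      filter_upwards [h0, ae_restrict_of_ae hpos] with x hx hx2
      simp only [Pi.zero_apply, ENNReal.ofReal_eq_zero] at hx
      exact absurd hx (not_le.2 (Finset.prod_pos fun i _ => Real.rpow_pos_of_pos (hx2 i) _))
    rw [ae_iff] at h2
    simp at h2
    exact hv0 h2
  have hne : ((volume Q)⁻¹ * I) ^ (m:ℝ) ≠ 0 := by
    have : (volume Q)⁻¹ * I ≠ 0 := mul_ne_zero (by simpa using hvt) hI0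
    simp [this, hm0]
  have he0 : ∀ i, e i ≠ 0 := by
    intro i hi
    have : ∏ i, (e i)⁻¹ = ⊤ := by
      rw [← Finset.mul_prod_erase _ _ (Finset.mem_univ i), hi, ENNReal.inv_zero]
      apply ENNReal.top_mul
      rw [Finset.prod_ne_zero_iff]
      intro j _
      simpa using het j
    rw [this, ENNReal.mul_top hne, top_le_iff] at h1
    exact hC.ne h1
  refine ⟨fun i => e i ^ ((m:ℝ) * q)⁻¹, fun i => ⟨by simp [he0 i, het i], by
    exact ENNReal.rpow_ne_top_of_nonneg (by positivity) (het i)⟩, fun i => ?_, ?_⟩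
  · filter_upwards [ae_le_ess (fun x => ENNReal.ofReal (u i x ^ ((m:ℝ) * q))) Q] with x hx
    calc e i ^ ((m:ℝ) * q)⁻¹ ≤ (ENNReal.ofReal (u i x ^ ((m:ℝ) * q))) ^ ((m:ℝ) * q)⁻¹ :=
          ENNReal.rpow_le_rpow hx (by positivity)
      _ = ENNReal.ofReal (u i x) := by
        rw [← ENNReal.ofReal_rpow_of_nonneg ((hu i).2.1 x) hmq.le, ← ENNReal.rpow_mul,
          mul_inv_cancel₀ hmq.ne', ENNReal.rpow_one]
  · have e1 : ∀ i, (e i ^ ((m:ℝ) * q)⁻¹) ^ q = e i ^ (m:ℝ)⁻¹ := by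
      intro i
      rw [← ENNReal.rpow_mul]; congr 1; field_simp
    simp only [e1]
    rw [ENNReal.prod_rpow_of_nonneg (by positivity : (0:ℝ) ≤ (m:ℝ)⁻¹)]
    have h3 : ((volume Q)⁻¹ * I) ^ (m:ℝ) ≤ C * ∏ i, e i := by
      calc ((volume Q)⁻¹ * I) ^ (m:ℝ) = ((volume Q)⁻¹ * I) ^ (m:ℝ) * ∏ i, ((e i)⁻¹ * e i) := by
            rw [Finset.prod_eq_one fun i _ => ENNReal.inv_mul_cancel (he0 i) (het i), mul_one]
        _ = ((volume Q)⁻¹ * I) ^ (m:ℝ) * (∏ i, (e i)⁻¹) * ∏ i, e i := by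
            rw [Finset.prod_mul_distrib, mul_assoc]
        _ ≤ _ := mul_le_mul' h1 le_rfl
    have h4 : (volume Q)⁻¹ * I ≤ C ^ ((m:ℝ)⁻¹) * (∏ i, e i) ^ ((m:ℝ)⁻¹) := by
      rw [← ENNReal.mul_rpow_of_nonneg _ _ (by positivity)]
      exact (ENNReal.le_rpow_inv_iff hm0).2 h3
    calc I = volume Q * ((volume Q)⁻¹ * I) := by
          rw [← mul_assoc, ENNReal.mul_inv_cancel hv0 hvt, one_mul]
      _ ≤ volume Q * (C ^ ((m:ℝ)⁻¹) * (∏ i, e i) ^ ((m:ℝ)⁻¹)) := mul_le_mul' le_rfl h4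
      _ = _ := by ring


end

lemma prod_le_sum {m : ℕ} (hm : 0 < m) {q : ℝ} (hq : 0 < q) (hmq : 1 ≤ (m:ℝ) * q)
    (y : Fin m → ℝ≥0∞) (hy : ∀ i, y i ≤ 1) : ∏ i, y i ^ q ≤ ∑ i, y i := by
  have : Nonempty (Fin m) := ⟨⟨0, hm⟩⟩
  obtain ⟨j, hj⟩ := Finite.exists_max y
  calc ∏ i, y i ^ q ≤ ∏ _i : Fin m, y j ^ q :=
        Finset.prod_le_prod' fun i _ => ENNReal.rpow_le_rpow (hj i) hq.le
    _ = y j ^ ((m:ℝ) * q) := by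
        rw [Finset.prod_const, Finset.card_univ, Fintype.card_fin, ← ENNReal.rpow_natCast,
          ← ENNReal.rpow_mul, mul_comm]
    _ ≤ y j ^ (1:ℝ) := ENNReal.rpow_le_rpow_of_exponent_ge (hy j) hmq
    _ = y j := ENNReal.rpow_one _
    _ ≤ _ := Finset.single_le_sum (f := y) (fun _ _ => zero_le) (Finset.mem_univ j)

lemma wMeas_eq {n : ℕ} (w : ESp n → ℝ) (E : Set (ESp n)) :
    wMeas w E = volume.withDensity (fun x => ENNReal.ofReal (w x)) E := by
  rw [withDensity_apply', wMeas]

lemma eps_le {n : ℕ} {e : ℝ≥0∞} (he : e ≠ ⊤) {Q : Set (ESp n)} {u f : ESp n → ℝ}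
    (h : ∀ᵐ x ∂(volume.restrict Q), e ≤ ENNReal.ofReal (u x)) :
    e * ∫⁻ x in Q, ENNReal.ofReal |f x| ≤ ∫⁻ x in Q, ENNReal.ofReal (|f x| * u x) := by
  rw [← lintegral_const_mul' _ _ he]
  apply lintegral_mono_ae
  filter_upwards [h] with x hx
  rw [ENNReal.ofReal_mul (abs_nonneg _), mul_comm]
  exact mul_le_mul' le_rfl hx

/-- **Theorem on `𝓜_α`, first weight condition.**  Let `0 ≤ α < mn`, `q = n/(mn-α)`,
`ν = ∏ uᵢ^q`.  If `u⃗^{mq} ∈ A_{(1,…,1)}` and `ν v^q ∈ A_∞`, then there is `C` such that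
`‖𝓜_α(f⃗)/v‖_{L^{q,∞}(ν v^q)} ≤ C ∏ ‖fᵢ‖_{L¹(uᵢ)}`. -/
theorem multilinear_fracMaximal_mixed_first {n m : ℕ} (hn : 0 < n) (hm : 0 < m)
    (α q : ℝ) (hα0 : 0 ≤ α) (hα : α < (m : ℝ) * (n : ℝ))
    (hq : q = (n : ℝ) / ((m : ℝ) * (n : ℝ) - α))
    (u : Fin m → ESp n → ℝ) (v : ESp n → ℝ)
    (hu : ∀ i, IsWeight (u i)) (hv : IsWeight v)
    (hA : A11 (fun i x => u i x ^ ((m : ℝ) * q)))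
    (hAinf : IsAinfty (fun x => (∏ i, u i x ^ q) * v x ^ q)) :
    ∃ C : ℝ≥0∞, C < ⊤ ∧
      ∀ f : Fin m → ESp n → ℝ,
        wnorm (fun x => multiMα α f x / ENNReal.ofReal (v x)) q
            (fun x => (∏ i, u i x ^ q) * v x ^ q)
          ≤ C * ∏ i, L1norm (f i) (u i) := by
  have hn0 : (0:ℝ) < n := by exact_mod_cast hn
  have hm0 : (0:ℝ) < m := by exact_mod_cast hm
  have hd : 0 < (m:ℝ) * n - α := by linarith
  have hq0 : 0 < q := by rw [hq]; positivity
  have hmq : 1 ≤ (m:ℝ) * q := by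
    rw [hq, ← mul_div_assoc, one_le_div hd]; linarith
  have hqe : (1 - α / ((m:ℝ) * n)) * m * q = 1 := by
    rw [hq]; field_simp
  set N : ESp n → ℝ≥0∞ := fun x => ENNReal.ofReal (∏ i, u i x ^ q) with hNd
  set V : ESp n → ℝ≥0∞ := fun x => ENNReal.ofReal (v x ^ q) with hVd
  have hprm : Measurable fun x => ∏ i, u i x ^ q :=
    Finset.measurable_prod _ fun i _ => (hu i).1.pow_const q
  have hNm : Measurable N := hprm.ennreal_ofReal
  have hVm : Measurable V := (hv.1.pow_const q).ennreal_ofReal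
  have hprn : ∀ x, 0 ≤ ∏ i, u i x ^ q := fun x =>
    Finset.prod_nonneg fun i _ => Real.rpow_nonneg ((hu i).2.1 x) _
  have hupos : ∀ᵐ x ∂(volume : Measure (ESp n)), ∀ i, 0 < u i x := ae_all_iff.2 fun i => (hu i).2.2.1
  have hprp : ∀ᵐ x ∂(volume : Measure (ESp n)), 0 < ∏ i, u i x ^ q := by
    filter_upwards [hupos] with x hx
    exact Finset.prod_pos fun i _ => Real.rpow_pos_of_pos (hx i) _
  set w : ESp n → ℝ := fun x => (∏ i, u i x ^ q) * v x ^ q with hwd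
  obtain ⟨p, hp, C2, hW⟩ := RA_Ainf (w := w) (hprm.mul (hv.1.pow_const q)) (by
    filter_upwards [hprp, hv.2.2.1] with x hx hx2
    exact mul_pos hx (Real.rpow_pos_of_pos hx2 _)) hAinf
  set W := volume.withDensity (fun x => ENNReal.ofReal (w x)) with hWd
  set ν := volume.withDensity N with hνd
  have hWV : W = ν.withDensity V := by
    rw [hνd, ← withDensity_mul _ hNm hVm, hWd]
    congr 1
    funext x
    simp only [Pi.mul_apply, hNd, hVd, hwd]
    rw [ENNReal.ofReal_mul (hprn x)]
  obtain ⟨D, hDt, hD⟩ := A11_fact hm hq0 hu hA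
  have hν : RA ν 1 (D + 1) := by
    refine RA_mk hNm (fun _ => by finiteness) ?_ 1 D hDt ?_
    · filter_upwards [hprp] with x hx; simpa [hNd] using hx
    intro Q hQ F hF hFm
    obtain ⟨ε, he, he1, he2⟩ := hD Q hQ
    have h1 : (∏ i, ε i ^ q) * volume F ≤ ∫⁻ x in F, N x := by
      refine lint_ge hF ?_
      filter_upwards [ae_all_iff.2 he1] with x hx
      simp only [hNd]
      rw [ENNReal.ofReal_prod_of_nonneg fun i _ => Real.rpow_nonneg ((hu i).2.1 x) _]
      refine Finset.prod_le_prod' fun i _ => ?_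
      rw [← ENNReal.ofReal_rpow_of_nonneg ((hu i).2.1 x) hq0.le]
      exact ENNReal.rpow_le_rpow (hx i) hq0.le
    simp only [pow_one]
    calc _ ≤ volume F * (D * volume Q * ∏ i, ε i ^ q) := mul_le_mul' le_rfl he2
      _ = D * volume Q * ((∏ i, ε i ^ q) * volume F) := by ring
      _ ≤ _ := mul_le_mul' le_rfl h1
  obtain ⟨K, hKt, hK⟩ := core hn hp hν hW hVm (fun _ => by finiteness) hWV
  refine ⟨(K * D * m) ^ (1/q) + 1, ?_, fun f => ?_⟩
  · rw [lt_top_iff_ne_top]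
    have : K * D * m ≠ ⊤ := by finiteness
    have := ENNReal.rpow_ne_top_of_nonneg (by positivity : 0 ≤ 1/q) this
    finiteness
  set A : Fin m → ℝ≥0∞ := fun i => L1norm (f i) (u i) with hAd
  set J : Fin m → Set (ESp n) → ℝ≥0∞ := fun i Q => ∫⁻ y in Q, ENNReal.ofReal |f i y| with hJ
  set μ : Fin m → Measure (ESp n) := fun i =>
    volume.withDensity (fun x => ENNReal.ofReal (|f i x| * u i x)) with hμ
  have hμu : ∀ i, μ i univ = A i := by
    intro i
    simp only [hμ, hAd, L1norm]
    rw [withDensity_apply _ MeasurableSet.univ, Measure.restrict_univ]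
  have hμA : ∀ i Q, μ i Q ≤ A i := fun i Q => by
    rw [← hμu]; exact measure_mono (subset_univ _)
  have hεJ : ∀ Q, IsCube Q → ∃ ε : Fin m → ℝ≥0∞, (∀ i, ε i ≠ 0 ∧ ε i ≠ ⊤) ∧
      (∀ i, ε i * J i Q ≤ μ i Q) ∧ ν Q ≤ D * volume Q * ∏ i, ε i ^ q := by
    intro Q hQ
    obtain ⟨ε, he, he1, he2⟩ := hD Q hQ
    refine ⟨ε, he, fun i => ?_, ?_⟩
    · simp only [hμ, hJ]
      rw [withDensity_apply _ hQ.meas]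
      exact eps_le (he i).2 (he1 i)
    · rw [hνd, withDensity_apply _ hQ.meas]; exact he2
  have hkey : ∀ Q, IsCube Q →
      (∏ i, ((volume Q) ^ (1 - α / ((m : ℝ) * (n : ℝ))))⁻¹ * J i Q) ^ q * ν Q ≤
        D * ∏ i, μ i Q ^ q := by
    intro Q hQ
    obtain ⟨hv0, hvt⟩ := cube_vol_ne hQ
    obtain ⟨ε, he, he1, he2⟩ := hεJ Q hQ
    have e1 : (∏ i, ((volume Q) ^ (1 - α / ((m : ℝ) * (n : ℝ))))⁻¹ * J i Q) ^ q =
        (volume Q)⁻¹ * ∏ i, J i Q ^ q := by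
      rw [Finset.prod_mul_distrib, ENNReal.mul_rpow_of_nonneg _ _ hq0.le, Finset.prod_const,
        Finset.card_univ, Fintype.card_fin, ENNReal.prod_rpow_of_nonneg hq0.le,
        ← ENNReal.rpow_neg, ← ENNReal.rpow_natCast, ← ENNReal.rpow_mul, ← ENNReal.rpow_mul]
      congr 1
      rw [neg_mul, ← mul_assoc, hqe, ENNReal.rpow_neg_one]
    rw [e1]
    calc _ ≤ (volume Q)⁻¹ * (∏ i, J i Q ^ q) * (D * volume Q * ∏ i, ε i ^ q) :=
          mul_le_mul' le_rfl he2
      _ = ((volume Q)⁻¹ * volume Q) * (D * ((∏ i, ε i ^ q) * ∏ i, J i Q ^ q)) := by ring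
      _ = D * ∏ i, (ε i * J i Q) ^ q := by
          rw [ENNReal.inv_mul_cancel hv0 hvt, one_mul, ← Finset.prod_mul_distrib]
          congr 1
          refine Finset.prod_congr rfl fun i _ => ?_
          rw [ENNReal.mul_rpow_of_nonneg _ _ hq0.le]
      _ ≤ _ := by
          refine mul_le_mul' le_rfl (Finset.prod_le_prod' fun i _ => ?_)
          exact ENNReal.rpow_le_rpow (he1 i) hq0.le
  rw [wnorm]
  refine iSup₂_le fun t ht => ?_
  by_cases hz : ∃ i, A i = 0
  · obtain ⟨i, hi⟩ := hz
    have hM0 : ∀ x, multiMα α f x = 0 := by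
      intro x
      rw [multiMα]
      simp only [ENNReal.iSup_eq_zero]
      intro Q hQ _
      obtain ⟨ε, he, he1, he2⟩ := hεJ Q hQ
      apply Finset.prod_eq_zero (Finset.mem_univ i)
      have h1 : ε i * J i Q = 0 := le_antisymm (((he1 i).trans (hμA i Q)).trans hi.le) zero_le
      have h2 : J i Q = 0 := (mul_eq_zero.1 h1).resolve_left (he i).1
      simp only [hJ] at h2
      rw [h2, mul_zero]
    have : {x : ESp n | ENNReal.ofReal t < multiMα α f x / ENNReal.ofReal (v x)} = ∅ := by
      ext x; simp [hM0]
    rw [this, wMeas_eq, measure_empty, ENNReal.zero_rpow_of_pos (by positivity), mul_zero]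
    exact zero_le
  push Not at hz
  by_cases htop : ∃ i, A i = ⊤
  · obtain ⟨i, hi⟩ := htop
    have : ∏ i, A i = ⊤ := by
      rw [← Finset.mul_prod_erase _ _ (Finset.mem_univ i), hi]
      apply ENNReal.top_mul
      rw [Finset.prod_ne_zero_iff]
      exact fun j _ => hz j
    rw [this, ENNReal.mul_top (by simp)]
    exact le_top
  push Not at htop
  set s : ℝ≥0∞ := ENNReal.ofReal t ^ q with hs
  have ht0 : ENNReal.ofReal t ≠ 0 := by simpa using ht
  have hs0 : s ≠ 0 := by simp [hs, ht]
  have hst : s ≠ ⊤ := by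
    rw [hs]; exact ENNReal.rpow_ne_top_of_nonneg hq0.le ENNReal.ofReal_ne_top
  have hBt : ∏ i, A i ^ q ≠ ⊤ := ENNReal.prod_ne_top fun i _ =>
    ENNReal.rpow_ne_top_of_nonneg hq0.le (htop i)
  set B := ∏ i, A i ^ q with hB
  set M : Measure (ESp n) := (D * B * s⁻¹) • ∑ i, (A i)⁻¹ • μ i with hM
  have hMQ : ∀ Q, M Q = D * B * s⁻¹ * ∑ i, (A i)⁻¹ * μ i Q := by
    intro Q
    simp [hM, Measure.smul_apply, Measure.finsetSum_apply]
  have hMu : M univ = D * B * s⁻¹ * m := by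
    rw [hMQ]
    congr 1
    rw [Finset.sum_congr rfl fun i _ => by
      rw [hμu, ENNReal.inv_mul_cancel (hz i) (htop i)]]
    simp
  have hMt : M univ ≠ ⊤ := by
    rw [hMu]
    have : s⁻¹ ≠ ⊤ := by simpa using hs0
    finiteness
  have hWE : wMeas w {x | ENNReal.ofReal t < multiMα α f x / ENNReal.ofReal (v x)} ≤
      K * (D * B * s⁻¹ * m) := by
    rw [wMeas_eq, ← hMu]
    refine le_trans (measure_mono_ae ?_) (hK M hMt)
    have hvW : ∀ᵐ x ∂W, 0 < v x := (withDensity_absolutelyContinuous _ _).ae_le hv.2.2.1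
    filter_upwards [hvW] with x hx hxE
    have hxE : ENNReal.ofReal t < multiMα α f x / ENNReal.ofReal (v x) := hxE
    have h1 : ENNReal.ofReal t * ENNReal.ofReal (v x) < multiMα α f x :=
      (ENNReal.lt_div_iff_mul_lt (by simp [hx]) (by simp)).1 hxE
    rw [multiMα] at h1
    simp only [lt_iSup_iff] at h1
    obtain ⟨Q, hQ, hxQ, h1⟩ := h1
    refine ⟨Q, hQ, hxQ, ?_⟩
    have h2 := ENNReal.rpow_lt_rpow h1 hq0
    have hν0 : ν Q ≠ 0 := hν.pos Q hQ.meas (cube_vol_ne hQ).1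
    have hνt : ν Q ≠ ⊤ := hν.fin Q hQ
    have h3 := ENNReal.mul_lt_mul_left hν0 hνt h2
    have h4 := h3.trans_le (hkey Q hQ)
    rw [ENNReal.mul_rpow_of_nonneg _ _ hq0.le, ENNReal.ofReal_rpow_of_nonneg hx.le hq0.le] at h4
    have h5 : ∏ i, μ i Q ^ q ≤ B * ∑ i, (A i)⁻¹ * μ i Q := by
      calc ∏ i, μ i Q ^ q = B * ∏ i, ((A i)⁻¹ * μ i Q) ^ q := by
            rw [hB, ← Finset.prod_mul_distrib]
            refine Finset.prod_congr rfl fun i _ => ?_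
            rw [← ENNReal.mul_rpow_of_nonneg _ _ hq0.le, ← mul_assoc,
              ENNReal.mul_inv_cancel (hz i) (htop i), one_mul]
        _ ≤ _ := by
            refine mul_le_mul' le_rfl (prod_le_sum hm hq0 hmq _ fun i => ?_)
            calc (A i)⁻¹ * μ i Q ≤ (A i)⁻¹ * A i := mul_le_mul' le_rfl (hμA i Q)
              _ = 1 := ENNReal.inv_mul_cancel (hz i) (htop i)
    have h6 : s * (V x * ν Q) < D * (B * ∑ i, (A i)⁻¹ * μ i Q) := by
      rw [← mul_assoc]
      exact h4.trans_le (mul_le_mul' le_rfl h5)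
    rw [hMQ]
    have h7 := ENNReal.mul_lt_mul_left (by simpa using hst : s⁻¹ ≠ 0) (by simpa using hs0) h6
    calc V x * ν Q = (s * s⁻¹) * (V x * ν Q) := by rw [ENNReal.mul_inv_cancel hs0 hst, one_mul]
      _ = s * (V x * ν Q) * s⁻¹ := by ring
      _ < D * (B * ∑ i, (A i)⁻¹ * μ i Q) * s⁻¹ := h7
      _ = _ := by ring
  have hq1 : 0 ≤ 1 / q := by positivity
  have hqq : q * (1/q) = 1 := by field_simp
  calc _ ≤ ENNReal.ofReal t * (K * (D * B * s⁻¹ * m)) ^ (1/q) :=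
        mul_le_mul' le_rfl (ENNReal.rpow_le_rpow hWE hq1)
    _ = ENNReal.ofReal t * ((K * D * m) * B * s⁻¹) ^ (1/q) := by congr 2; ring
    _ = (K * D * m) ^ (1/q) * B ^ (1/q) * (ENNReal.ofReal t * (s⁻¹) ^ (1/q)) := by
        rw [ENNReal.mul_rpow_of_nonneg _ _ hq1, ENNReal.mul_rpow_of_nonneg _ _ hq1]; ring
    _ = (K * D * m) ^ (1/q) * ∏ i, A i := by
        rw [hB, ENNReal.prod_rpow_of_nonneg hq0.le, ← ENNReal.rpow_mul, hqq, ENNReal.rpow_one,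
          ENNReal.inv_rpow, hs, ← ENNReal.rpow_mul, hqq, ENNReal.rpow_one,
          ENNReal.mul_inv_cancel ht0 ENNReal.ofReal_ne_top, mul_one]
    _ ≤ _ := mul_le_mul' le_self_add le_rfl


end
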